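/- Let α,β > −1/2. There exist constants c⁽¹⁾ > 0 and C > 0 depending only on α and β such that for every positive integer L and every θ with π/2 < θ ≤ π − c⁽¹⁾/L, setting L̃ := L + (α+β+2)/2 and θ' := π − θ, |v_L^{(α,β)}(1,cos θ) − (2^{−(α+β+1)}/Γ(α+1)) L̃^{α+1/2} (−1)^L m_{β,α+1}(θ') cos ω_β(L̃θ')| ≤ C (2^{−(α+β+1)}/Γ(α+1)) L̃^{α+1/2} m_{β,α+1}(θ') (sin θ')^{−1} L^{−1}. -/

import Mathlib

open MeasureTheory Real
open scoped ENNReal NNReal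

/-- The classical Jacobi polynomial `P_n^{(a,b)}` (hypergeometric representation,
normalised so that `P_n^{(a,b)}(1) = Γ(n+a+1)/(Γ(n+1)Γ(a+1))`). -/
noncomputable def jacobiP (a b : ℝ) (n : ℕ) (x : ℝ) : ℝ :=
  ∑ s ∈ Finset.range (n + 1),
    (Real.Gamma ((n : ℝ) + a + 1) /
        (Real.Gamma ((s : ℝ) + a + 1) * (Nat.factorial (n - s) : ℝ))) *
      (Real.Gamma ((n : ℝ) + b + 1) /
        (Real.Gamma ((n : ℝ) - (s : ℝ) + b + 1) * (Nat.factorial s : ℝ))) *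
      ((x - 1) / 2) ^ s * ((x + 1) / 2) ^ (n - s)

/-- `M_ℓ^{(a,b)}`, the `L₂(w_{a,b})` normalisation constant of `P_ℓ^{(a,b)}`. -/
noncomputable def jacobiM (a b : ℝ) (ℓ : ℕ) : ℝ :=
  (2 : ℝ) ^ (a + b + 1) / (2 * (ℓ : ℝ) + a + b + 1) *
    (Real.Gamma ((ℓ : ℝ) + a + 1) * Real.Gamma ((ℓ : ℝ) + b + 1)) /
    (Real.Gamma ((ℓ : ℝ) + 1) * Real.Gamma ((ℓ : ℝ) + a + b + 1))

/-- The generalised Dirichlet kernel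
`v_L^{(a,b)}(t,s) = Σ_{ℓ=0}^{L} (M_ℓ^{(a,b)})⁻¹ P_ℓ^{(a,b)}(t) P_ℓ^{(a,b)}(s)`. -/
noncomputable def dirichletJ (a b : ℝ) (L : ℕ) (t s : ℝ) : ℝ :=
  ∑ ℓ ∈ Finset.range (L + 1), (jacobiM a b ℓ)⁻¹ * jacobiP a b ℓ t * jacobiP a b ℓ s

/-- The filtered Jacobi kernel
`v_{L,g}^{(a,b)}(t,s) = Σ_{ℓ=0}^{2L−1} g(ℓ/L) (M_ℓ^{(a,b)})⁻¹ P_ℓ^{(a,b)}(t) P_ℓ^{(a,b)}(s)`. -/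
noncomputable def filteredJ (a b : ℝ) (g : ℝ → ℝ) (L : ℕ) (t s : ℝ) : ℝ :=
  ∑ ℓ ∈ Finset.range (2 * L),
    g ((ℓ : ℝ) / (L : ℝ)) * (jacobiM a b ℓ)⁻¹ * jacobiP a b ℓ t * jacobiP a b ℓ s

/-- `Z(d,ℓ)`, the dimension of the space of spherical harmonics of degree `ℓ` on `S^d`. -/
noncomputable def Zdim (d ℓ : ℕ) : ℝ :=
  (2 * (ℓ : ℝ) + (d : ℝ) - 1) * Real.Gamma ((ℓ : ℝ) + (d : ℝ) - 1) /
    (Real.Gamma (d : ℝ) * Real.Gamma ((ℓ : ℝ) + 1))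

/-- The normalised Legendre polynomial `P_ℓ^{(d+1)}` for `S^d`. -/
noncomputable def normLegendre (d ℓ : ℕ) (t : ℝ) : ℝ :=
  jacobiP (((d : ℝ) - 2) / 2) (((d : ℝ) - 2) / 2) ℓ t /
    jacobiP (((d : ℝ) - 2) / 2) (((d : ℝ) - 2) / 2) ℓ 1

/-- The Dirichlet kernel on `S^d`: `v_L^{(d)}(t) = Σ_{ℓ=0}^L Z(d,ℓ) P_ℓ^{(d+1)}(t)`. -/
noncomputable def sphDirichlet (d L : ℕ) (t : ℝ) : ℝ :=
  ∑ ℓ ∈ Finset.range (L + 1), Zdim d ℓ * normLegendre d ℓ t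

/-- The filtered kernel on `S^d`: `v_{L,g}^{(d)}(t) = Σ_{ℓ=0}^∞ g(ℓ/L) Z(d,ℓ) P_ℓ^{(d+1)}(t)`. -/
noncomputable def sphFiltered (d : ℕ) (g : ℝ → ℝ) (L : ℕ) (t : ℝ) : ℝ :=
  ∑' ℓ : ℕ, g ((ℓ : ℝ) / (L : ℝ)) * Zdim d ℓ * normLegendre d ℓ t

/-- The surface area `|S^n| = 2π^{(n+1)/2}/Γ((n+1)/2)` of the unit sphere `S^n`. -/
noncomputable def sphereArea (n : ℕ) : ℝ :=
  2 * Real.pi ^ (((n : ℝ) + 1) / 2) / Real.Gamma (((n : ℝ) + 1) / 2)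

/-- `m_{a,b}(θ) = π^{−1/2} (sin(θ/2))^{−a−1/2} (cos(θ/2))^{−b−1/2}`. -/
noncomputable def mAB (a b θ : ℝ) : ℝ :=
  Real.pi ^ (-(1 / 2 : ℝ)) * Real.sin (θ / 2) ^ (-a - 1 / 2) *
    Real.cos (θ / 2) ^ (-b - 1 / 2)

/-- `ω_γ(z) = z − γπ/2 − π/4`. -/
noncomputable def omegaA (γ z : ℝ) : ℝ := z - γ * Real.pi / 2 - Real.pi / 4

/-!
Summing the kernel in closed form gives `v_L(1, x)` as a Gamma quotient times the Jacobi
polynomial `P_L^{(α+1,β)}(x)`, and the reflection `x ↦ -x` moves the left endpoint to the right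
one, where the polynomial is `P_L^{(β,α+1)}(cos θ')`. Multiplied by
`sin(θ/2)^(a+1/2) cos(θ/2)^(b+1/2)`, the function `P_n^{(a,b)}(cos θ)` satisfies
`U'' + (N² + g) U = 0` with `N = n + (a+b+1)/2` and `g = O(θ⁻²)`. The Liouville–Green argument,
run from `π/2` towards `0`, compares `U` with the free oscillation having the same data at `π/2`,
with relative error `O(1/(Nθ))`. The data at `π/2` are the values at `0` of `P_n^{(a,b)}` and of
its derivative, a multiple of `P_{n-1}^{(a+1,b+1)}`. Both are Cauchy coefficients of
`(1+z)^p (1-z)^q`, that is, integrals over `[0, π]` of `sin^m` against a smooth factor; the mass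
of `sin^m` concentrates at `π/2` and its total is a Wallis integral.
-/

open Finset.HasAntidiagonal (antidiagonal mem_antidiagonal)
open Finset (sum_congr mul_sum sum_add_distrib sum_sub_distrib)
open Filter (Tendsto atTop)
open scoped Asymptotics ComplexConjugate Filter Nat Topology

section Binomial

variable {R : Type*} [CommRing R] [BinomialRing R]

lemma succ_mul_choose_succ (r : R) (k : ℕ) :
    (k + 1) * Ring.choose r (k + 1) = (r - k) * Ring.choose r k := by
  have h := Ring.choose_smul_choose r k.le_succ
  rw [Nat.choose_succ_self_right, Nat.sub_eq_of_eq_add (Nat.succ_eq_one_add k),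
    Ring.choose_one_right, nsmul_eq_mul] at h
  push_cast at h
  rw [h, mul_comm]

lemma succ_mul_choose_add_one_succ (r : R) (k : ℕ) :
    (k + 1) * Ring.choose (r + 1) (k + 1) = (r + 1) * Ring.choose r k := by
  linear_combination (k + 1 : R) * Ring.choose_succ_succ r k + succ_mul_choose_succ r k

lemma choose_add_one_mul (r : R) (k : ℕ) :
    (r + 1 - k) * Ring.choose (r + 1) k = (r + 1) * Ring.choose r k := by
  rw [← succ_mul_choose_succ, succ_mul_choose_add_one_succ]

end Binomial

lemma Gamma_add_nat_div_eq_choose {x : ℝ} (hx : -1 < x) (k : ℕ) :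
    Gamma (x + k + 1) / (Gamma (x + 1) * k !) = Ring.choose (x + k) k := by
  have hΓ : Gamma (x + 1) ≠ 0 := (Gamma_pos_of_pos (by linarith)).ne'
  rw [div_eq_iff (by positivity)]
  induction k with
  | zero => simp
  | succ k ih =>
    have hpos : x + k + 1 ≠ 0 := (by linarith [k.cast_nonneg (α := ℝ)] : 0 < x + k + 1).ne'
    have hchoose := succ_mul_choose_add_one_succ (x + k) k
    rw [Nat.cast_succ, ← add_assoc, Gamma_add_one hpos, ih, Nat.factorial_succ]
    push_cast
    linear_combination -(Gamma (x + 1) * k !) * hchoose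

section WeightedSums

variable {R : Type*} [CommSemiring R] (n : ℕ) (f : ℕ × ℕ → R)

lemma sum_antidiagonal_succ_fst_mul :
    ∑ p ∈ antidiagonal (n + 1), p.1 * f p =
      ∑ p ∈ antidiagonal n, (p.1 + 1) * f (p.1 + 1, p.2) := by
  rw [Finset.Nat.sum_antidiagonal_succ]
  simp only [Nat.cast_zero, zero_mul, zero_add, Nat.cast_succ]

lemma sum_antidiagonal_succ_snd_mul :
    ∑ p ∈ antidiagonal (n + 1), p.2 * f p =
      ∑ p ∈ antidiagonal n, (p.2 + 1) * f (p.1, p.2 + 1) := by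
  rw [Finset.Nat.sum_antidiagonal_succ']
  simp only [Nat.cast_zero, zero_mul, zero_add, Nat.cast_succ]

lemma succ_mul_sum_antidiagonal_succ :
    (n + 1) * ∑ p ∈ antidiagonal (n + 1), f p =
      ∑ p ∈ antidiagonal n, ((p.1 + 1) * f (p.1 + 1, p.2) + (p.2 + 1) * f (p.1, p.2 + 1)) := by
  rw [sum_add_distrib, ← sum_antidiagonal_succ_fst_mul, ← sum_antidiagonal_succ_snd_mul,
    ← sum_add_distrib, mul_sum]
  refine sum_congr rfl fun p hp => ?_
  rw [← add_mul, ← Nat.cast_add, mem_antidiagonal.mp hp, Nat.cast_succ]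

end WeightedSums

/-- The coefficient of `((x - 1) / 2) ^ s * ((x + 1) / 2) ^ k` in the Jacobi polynomial
`P_{s+k}^{(a,b)}(x)`. -/
noncomputable def jacobiCoeff (a b : ℝ) (s k : ℕ) : ℝ :=
  Ring.choose (s + k + a) k * Ring.choose (s + k + b) s

section JacobiAlgebra

variable {a b : ℝ}

lemma jacobiP_eq_sum_antidiagonal (ha : -1 < a) (hb : -1 < b) (n : ℕ) (x : ℝ) :
    jacobiP a b n x = ∑ p ∈ antidiagonal n,
      jacobiCoeff a b p.1 p.2 * (((x - 1) / 2) ^ p.1 * ((x + 1) / 2) ^ p.2) := by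
  rw [Finset.Nat.sum_antidiagonal_eq_sum_range_succ
    (fun s k => jacobiCoeff a b s k * (((x - 1) / 2) ^ s * ((x + 1) / 2) ^ k))]
  refine sum_congr rfl fun s hs => ?_
  have hsn : s ≤ n := Nat.lt_succ_iff.mp (Finset.mem_range.mp hs)
  have hchoose_a := Gamma_add_nat_div_eq_choose (x := s + a)
    (by linarith [s.cast_nonneg (α := ℝ)]) (n - s)
  have hchoose_b := Gamma_add_nat_div_eq_choose (x := (n - s : ℕ) + b)
    (by linarith [(n - s).cast_nonneg (α := ℝ)]) s
  rw [jacobiCoeff, show (s : ℝ) + (n - s : ℕ) + a = s + a + (n - s : ℕ) by ring, ← hchoose_a,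
    show (s : ℝ) + (n - s : ℕ) + b = (n - s : ℕ) + b + s by ring, ← hchoose_b, mul_assoc]
  push_cast [hsn]
  ring_nf

lemma jacobiP_neg (a b : ℝ) (n : ℕ) (x : ℝ) :
    jacobiP a b n (-x) = (-1) ^ n * jacobiP b a n x := by
  unfold jacobiP
  rw [← Finset.sum_flip, mul_sum]
  refine sum_congr rfl fun s hs => ?_
  have hsn : s ≤ n := Nat.lt_succ_iff.mp (Finset.mem_range.mp hs)
  rw [Nat.sub_sub_self hsn, Nat.cast_sub hsn, sub_sub_cancel,
    show (-x - 1) / 2 = -1 * ((x + 1) / 2) by ring,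
    show (-x + 1) / 2 = -1 * ((x - 1) / 2) by ring, mul_pow, mul_pow,
    ← Nat.sub_add_cancel hsn, pow_add, Nat.sub_add_cancel hsn]
  ring

lemma jacobiP_one (hb : -1 < b) (n : ℕ) :
    jacobiP a b n 1 = Gamma (n + a + 1) / (Gamma (a + 1) * n !) := by
  have hΓ : Gamma (n + b + 1) ≠ 0 :=
    (Gamma_pos_of_pos (by linarith [n.cast_nonneg (α := ℝ)])).ne'
  rw [jacobiP, Finset.sum_eq_single 0 (fun s _ hs => by simp [hs]) (by simp)]
  simp [hΓ]

lemma jacobiCoeff_add_one_add_one_mul_fst (a b : ℝ) (s k : ℕ) :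
    (s + a + 1) * jacobiCoeff (a + 1) (b + 1) s k = (k + 1) * jacobiCoeff a b s (k + 1) := by
  have h := succ_mul_choose_succ (s + k + a + 1) k
  simp only [jacobiCoeff, Nat.cast_succ, ← add_assoc] at h ⊢
  rw [add_right_comm _ 1 a, add_right_comm _ 1 b]
  linear_combination -Ring.choose (s + k + b + 1) s * h

lemma jacobiCoeff_add_one_add_one_mul_snd (a b : ℝ) (s k : ℕ) :
    (k + b + 1) * jacobiCoeff (a + 1) (b + 1) s k = (s + 1) * jacobiCoeff a b (s + 1) k := by
  have h := succ_mul_choose_succ (s + k + b + 1) s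
  simp only [jacobiCoeff, Nat.cast_succ, ← add_assoc] at h ⊢
  rw [add_right_comm (s : ℝ) 1 k, add_right_comm _ 1 a, add_right_comm _ 1 b]
  linear_combination -Ring.choose (s + k + a + 1) k * h

lemma jacobiCoeff_add_one_mul (a b : ℝ) (s k : ℕ) :
    (s + a + 1) * jacobiCoeff (a + 1) b s k = (s + k + a + 1) * jacobiCoeff a b s k := by
  have h := choose_add_one_mul (s + k + a) k
  simp only [jacobiCoeff, ← add_assoc]
  linear_combination Ring.choose (s + k + b) s * h

lemma jacobiCoeff_add_one_mul_fst (a b : ℝ) (s k : ℕ) :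
    (s + k + b + 1) * jacobiCoeff (a + 1) b s k = (s + 1) * jacobiCoeff a b (s + 1) k := by
  have h := succ_mul_choose_add_one_succ (s + k + b) s
  simp only [jacobiCoeff, Nat.cast_succ, ← add_assoc] at h ⊢
  rw [add_right_comm (s : ℝ) 1 k, add_right_comm _ 1 a, add_right_comm _ 1 b]
  linear_combination -Ring.choose (s + k + a + 1) k * h

lemma jacobiCoeff_add_one_mul_snd (a b : ℝ) (s k : ℕ) :
    (s + k + b + 1) * jacobiCoeff (a + 1) b s k =
      (k + b + 1) * (jacobiCoeff (a + 1) b s (k + 1) - jacobiCoeff a b s (k + 1)) := by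
  have hchoose := choose_add_one_mul (s + k + b) s
  have hpascal := Ring.choose_succ_succ (s + k + a + 1) k
  simp only [jacobiCoeff, Nat.cast_succ, ← add_assoc] at hchoose hpascal ⊢
  rw [add_right_comm _ 1 a, add_right_comm _ 1 b, hpascal]
  linear_combination -Ring.choose (s + k + a + 1) k * hchoose

lemma cast_fst_add_cast_snd {n : ℕ} {p : ℕ × ℕ} (hp : p ∈ antidiagonal n) :
    (p.1 : ℝ) + p.2 = n := by
  exact_mod_cast mem_antidiagonal.mp hp

lemma jacobiP_add_one_eq_sum_antidiagonal_succ (ha : -1 < a) (hb : -1 < b) (m : ℕ) (x : ℝ) :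
    (m + b + 1) * jacobiP (a + 1) b m x = ∑ p ∈ antidiagonal (m + 1),
      ((p.2 + b) * (jacobiCoeff (a + 1) b p.1 p.2 - jacobiCoeff a b p.1 p.2) -
        p.1 * jacobiCoeff a b p.1 p.2) * (((x - 1) / 2) ^ p.1 * ((x + 1) / 2) ^ p.2) := by
  simp only [sub_mul _ _ (_ * _), sum_sub_distrib, mul_assoc (Nat.cast _)]
  rw [sum_antidiagonal_succ_fst_mul m
    (fun p => jacobiCoeff a b p.1 p.2 * (((x - 1) / 2) ^ p.1 * ((x + 1) / 2) ^ p.2)),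
    Finset.Nat.sum_antidiagonal_succ', jacobiP_eq_sum_antidiagonal (by linarith) hb, mul_sum,
    show jacobiCoeff (a + 1) b (m + 1) 0 = jacobiCoeff a b (m + 1) 0 by simp [jacobiCoeff],
    sub_self, mul_zero, zero_mul, zero_add, ← sum_sub_distrib]
  refine sum_congr rfl fun p hp => ?_
  rw [← cast_fst_add_cast_snd hp]
  push_cast
  linear_combination ((x - 1) / 2) ^ p.1 * ((x + 1) / 2) ^ p.2 *
    ((x + 1) / 2 * jacobiCoeff_add_one_mul_snd a b p.1 p.2 -
      (x - 1) / 2 * jacobiCoeff_add_one_mul_fst a b p.1 p.2)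

lemma jacobiP_contiguous (ha : -1 < a) (hb : -1 < b) (m : ℕ) (x : ℝ) :
    (2 * m + a + b + 3) * jacobiP a b (m + 1) x =
      (m + a + b + 2) * jacobiP (a + 1) b (m + 1) x - (m + b + 1) * jacobiP (a + 1) b m x := by
  rw [jacobiP_add_one_eq_sum_antidiagonal_succ ha hb, jacobiP_eq_sum_antidiagonal ha hb,
    jacobiP_eq_sum_antidiagonal (by linarith) hb, mul_sum, mul_sum, ← sum_sub_distrib]
  refine sum_congr rfl fun p hp => ?_
  have hm : (m : ℝ) = p.1 + p.2 - 1 := by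
    linarith [cast_fst_add_cast_snd hp, m.cast_succ (R := ℝ)]
  rw [hm]
  linear_combination -((x - 1) / 2) ^ p.1 * ((x + 1) / 2) ^ p.2 *
    jacobiCoeff_add_one_mul a b p.1 p.2

lemma hasDerivAt_pow_mul_pow (s k : ℕ) (x : ℝ) :
    HasDerivAt (fun x : ℝ => ((x - 1) / 2) ^ s * ((x + 1) / 2) ^ k)
      ((s * (((x - 1) / 2) ^ (s - 1) * ((x + 1) / 2) ^ k) +
        k * (((x - 1) / 2) ^ s * ((x + 1) / 2) ^ (k - 1))) / 2) x := by
  have hleft := (((hasDerivAt_id x).sub_const 1).div_const 2).pow s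
  have hright := (((hasDerivAt_id x).add_const 1).div_const 2).pow k
  exact (hleft.mul hright).congr_deriv (by simp only [id, Pi.pow_apply]; ring)

lemma hasDerivAt_jacobiP (ha : -1 < a) (hb : -1 < b) (n : ℕ) (x : ℝ) :
    HasDerivAt (jacobiP a b n)
      ((∑ p ∈ antidiagonal n, p.1 *
          (jacobiCoeff a b p.1 p.2 * (((x - 1) / 2) ^ (p.1 - 1) * ((x + 1) / 2) ^ p.2)) +
        ∑ p ∈ antidiagonal n, p.2 *
          (jacobiCoeff a b p.1 p.2 * (((x - 1) / 2) ^ p.1 * ((x + 1) / 2) ^ (p.2 - 1)))) / 2)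
      x := by
  rw [funext (jacobiP_eq_sum_antidiagonal ha hb n), ← sum_add_distrib, Finset.sum_div]
  refine HasDerivAt.fun_sum fun p _ => ?_
  exact ((hasDerivAt_pow_mul_pow p.1 p.2 x).const_mul _).congr_deriv (by ring)

lemma hasDerivAt_jacobiP_succ (ha : -1 < a) (hb : -1 < b) (m : ℕ) (x : ℝ) :
    HasDerivAt (jacobiP a b (m + 1)) ((m + a + b + 2) / 2 * jacobiP (a + 1) (b + 1) m x) x := by
  refine (hasDerivAt_jacobiP ha hb (m + 1) x).congr_deriv ?_
  rw [sum_antidiagonal_succ_fst_mul m (fun p =>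
      jacobiCoeff a b p.1 p.2 * (((x - 1) / 2) ^ (p.1 - 1) * ((x + 1) / 2) ^ p.2)),
    sum_antidiagonal_succ_snd_mul m (fun p =>
      jacobiCoeff a b p.1 p.2 * (((x - 1) / 2) ^ p.1 * ((x + 1) / 2) ^ (p.2 - 1))),
    ← sum_add_distrib, jacobiP_eq_sum_antidiagonal (by linarith) (by linarith), mul_sum,
    Finset.sum_div]
  refine sum_congr rfl fun p hp => ?_
  rw [← cast_fst_add_cast_snd hp, Nat.add_sub_cancel, Nat.add_sub_cancel]
  linear_combination -((x - 1) / 2) ^ p.1 * ((x + 1) / 2) ^ p.2 / 2 *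
    (jacobiCoeff_add_one_add_one_mul_fst a b p.1 p.2 +
      jacobiCoeff_add_one_add_one_mul_snd a b p.1 p.2)

lemma natCast_mul_pow_sub_one_mul {R : Type*} [CommSemiring R] (n : ℕ) (y : R) :
    n * (y ^ (n - 1) * y) = n * y ^ n := by
  cases n <;> simp [pow_succ]

lemma one_sub_sq_mul_deriv_jacobiP (ha : -1 < a) (hb : -1 < b) (m : ℕ) (x : ℝ) :
    (1 - x ^ 2) * deriv (jacobiP (a + 1) (b + 1) m) x =
      ((a + 1) * (1 + x) - (b + 1) * (1 - x)) * jacobiP (a + 1) (b + 1) m x -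
        2 * (m + 1) * jacobiP a b (m + 1) x := by
  rw [(hasDerivAt_jacobiP (by linarith) (by linarith) m x).deriv, mul_assoc 2,
    jacobiP_eq_sum_antidiagonal ha hb, succ_mul_sum_antidiagonal_succ,
    jacobiP_eq_sum_antidiagonal (by linarith) (by linarith), ← sum_add_distrib, Finset.sum_div,
    mul_sum, mul_sum, mul_sum, ← sum_sub_distrib]
  refine sum_congr rfl fun p _ => ?_
  rw [← mul_assoc (p.1 + 1 : ℝ), ← mul_assoc (p.2 + 1 : ℝ),
    ← jacobiCoeff_add_one_add_one_mul_fst, ← jacobiCoeff_add_one_add_one_mul_snd]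
  linear_combination (-2 * jacobiCoeff (a + 1) (b + 1) p.1 p.2) *
    ((x + 1) / 2 * ((x + 1) / 2) ^ p.2 * natCast_mul_pow_sub_one_mul p.1 ((x - 1) / 2) +
      (x - 1) / 2 * ((x - 1) / 2) ^ p.1 * natCast_mul_pow_sub_one_mul p.2 ((x + 1) / 2))

lemma inv_jacobiM_mul_jacobiP_one (ha : -1 < a) (hb : -1 < b) (n : ℕ) :
    (jacobiM a b n)⁻¹ * jacobiP a b n 1 =
      2 ^ (-(a + b + 1)) / Gamma (a + 1) *
        ((2 * n + a + b + 1) * Gamma (n + a + b + 1) / Gamma (n + b + 1)) := by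
  have hΓa : Gamma (n + a + 1) ≠ 0 :=
    (Gamma_pos_of_pos (by linarith [n.cast_nonneg (α := ℝ)])).ne'
  rw [jacobiP_one hb, jacobiM, rpow_neg zero_le_two, Gamma_nat_eq_factorial]
  simp only [mul_inv, div_eq_mul_inv, inv_inv]
  field_simp

lemma dirichletJ_one_eq_jacobiP (ha : -1 < a) (hb : -1 < b) (hab : a + b + 1 ≠ 0) (L : ℕ)
    (x : ℝ) :
    dirichletJ a b L 1 x = 2 ^ (-(a + b + 1)) / Gamma (a + 1) *
      (Gamma (L + a + b + 2) / Gamma (L + b + 1)) * jacobiP (a + 1) b L x := by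
  simp only [dirichletJ, inv_jacobiM_mul_jacobiP_one ha hb]
  induction L with
  | zero =>
    have hΓa : Gamma (a + 1) ≠ 0 := (Gamma_pos_of_pos (by linarith)).ne'
    have hΓa' : Gamma (a + 1 + 1) ≠ 0 := (Gamma_pos_of_pos (by linarith)).ne'
    have hΓb : Gamma (b + 1) ≠ 0 := (Gamma_pos_of_pos (by linarith)).ne'
    have hΓ : Gamma (a + b + 2) = (a + b + 1) * Gamma (a + b + 1) := by
      rw [← Gamma_add_one hab]; ring_nf
    simp [jacobiP, hΓ, hΓa, hΓa', hΓb]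
  | succ m ih =>
    have : (0 : ℝ) ≤ m := m.cast_nonneg
    have hΓ : Gamma (m + 1 + a + b + 2) = (m + a + b + 2) * Gamma (m + a + b + 2) := by
      rw [← Gamma_add_one (by linarith)]; ring_nf
    have hΓb : Gamma (m + 1 + b + 1) = (m + b + 1) * Gamma (m + b + 1) := by
      rw [← Gamma_add_one (by linarith)]; ring_nf
    have hΓb_ne : Gamma (m + b + 1) ≠ 0 := (Gamma_pos_of_pos (by linarith)).ne'
    have hmb : m + b + 1 ≠ 0 := by linarith
    rw [Finset.sum_range_succ, ih, Nat.cast_succ, hΓ, hΓb,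
      show (m : ℝ) + 1 + a + b + 1 = m + a + b + 2 by ring]
    field_simp
    linear_combination Gamma (m + a + b + 2) / Gamma (a + 1) * jacobiP_contiguous ha hb m x

end JacobiAlgebra

section CauchyCoefficients

lemma circleMap_zero_one_two_pi_sub (t : ℝ) :
    circleMap 0 1 (2 * π - t) = conj (circleMap 0 1 t) := by
  simp only [circleMap_zero, Complex.ofReal_one, one_mul, ← Complex.exp_conj, map_mul,
    Complex.conj_ofReal, Complex.conj_I]
  rw [← Complex.exp_periodic (_ * -Complex.I)]
  congr 1
  push_cast
  ring

lemma integral_zero_two_pi_eq_of_conj_symm {G : ℝ → ℂ} (hG : Continuous G)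
    (hconj : ∀ t, G (2 * π - t) = conj (G t)) :
    ∫ t in (0 : ℝ)..2 * π, G t = ((2 * ∫ t in (0 : ℝ)..π, (G t).re : ℝ) : ℂ) := by
  have hG_conj : Continuous fun t => conj (G t) := Complex.continuous_conj.comp hG
  have hreflect : ∫ t in π..2 * π, G t = ∫ t in (0 : ℝ)..π, conj (G t) := by
    simp only [← hconj]
    rw [intervalIntegral.integral_comp_sub_left G (2 * π), sub_zero, two_mul, add_sub_cancel_right]
  rw [← intervalIntegral.integral_add_adjacent_intervals (hG.intervalIntegrable 0 π)
      (hG.intervalIntegrable π _), hreflect,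
    ← intervalIntegral.integral_add (hG.intervalIntegrable _ _)
      (hG_conj.intervalIntegrable _ _),
    ← intervalIntegral.integral_const_mul, ← intervalIntegral.integral_ofReal]
  simp only [Complex.add_conj]

lemma iteratedDeriv_zero_eq_integral_re {F : ℂ → ℂ} (hF : DiffContOnCl ℂ F (Metric.ball 0 1))
    (hconj : ∀ z, ‖z‖ ≤ 1 → F (conj z) = conj (F z)) (n : ℕ) :
    iteratedDeriv n F 0 =
      (n ! * (π⁻¹ * ∫ t in (0 : ℝ)..π, (F (circleMap 0 1 t) / circleMap 0 1 t ^ n).re) : ℝ) := by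
  have hnorm : ∀ t, ‖circleMap 0 1 t‖ ≤ 1 := fun t => by simp
  have hne : ∀ t, circleMap 0 1 t ≠ 0 := fun t => circleMap_ne_center one_ne_zero
  have hcauchy := hF.circleIntegral_one_div_sub_center_pow_smul one_pos n
  have hintegrand : ∀ t, deriv (circleMap 0 1) t •
      (1 / (circleMap 0 1 t - 0) ^ (n + 1)) • F (circleMap 0 1 t) =
        Complex.I * (F (circleMap 0 1 t) / circleMap 0 1 t ^ n) := by
    intro t
    rw [deriv_circleMap, sub_zero, smul_eq_mul, smul_eq_mul, pow_succ]
    field_simp [hne t]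
  have hcont : Continuous fun t => F (circleMap 0 1 t) / circleMap 0 1 t ^ n := by
    have hcircle := continuous_circleMap (0 : ℂ) 1
    refine (hF.continuousOn.comp_continuous hcircle fun t => ?_).div (hcircle.pow n)
      fun t => pow_ne_zero n (hne t)
    simp [closure_ball]
  rw [circleIntegral, intervalIntegral.integral_congr fun t _ => hintegrand t,
    intervalIntegral.integral_const_mul, integral_zero_two_pi_eq_of_conj_symm hcont fun t => by
      rw [circleMap_zero_one_two_pi_sub, hconj _ (hnorm t), map_div₀, map_pow], smul_eq_mul]
    at hcauchy
  have hn : (n ! : ℂ) ≠ 0 := Nat.cast_ne_zero.mpr n.factorial_ne_zero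
  have hπ : (π : ℂ) ≠ 0 := Complex.ofReal_ne_zero.mpr pi_ne_zero
  push_cast at hcauchy ⊢
  field_simp at hcauchy ⊢
  linear_combination -hcauchy

end CauchyCoefficients

section ValueAtZero

lemma contDiffAt_one_add_cpow_zero (A : ℂ) (n : WithTop ℕ∞) :
    ContDiffAt ℂ n (fun z : ℂ => (1 + z) ^ A) 0 :=
  Complex.one_add_cpow_hasFPowerSeriesAt_zero.analyticAt.contDiffAt

lemma contDiffAt_one_sub_cpow_zero (A : ℂ) (n : WithTop ℕ∞) :
    ContDiffAt ℂ n (fun z : ℂ => (1 - z) ^ A) 0 := by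
  simp only [sub_eq_add_neg]
  refine ContDiffAt.comp (0 : ℂ) (g := fun z : ℂ => (1 + z) ^ A) ?_ contDiff_neg.contDiffAt
  simpa only [neg_zero] using contDiffAt_one_add_cpow_zero A n

lemma iteratedDeriv_one_add_cpow_zero (A : ℂ) (k : ℕ) :
    iteratedDeriv k (fun z : ℂ => (1 + z) ^ A) 0 = k ! * Ring.choose A k := by
  have hbinomial := Complex.one_add_cpow_hasFPowerSeriesAt_zero (a := A)
  have hseries := hbinomial.analyticAt.hasFPowerSeriesAt.eq_formalMultilinearSeries hbinomial
  have hcoeff := congrFun ((FormalMultilinearSeries.ofScalars_series_eq_iff ℂ _ _).mp hseries) k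
  rw [← hcoeff, mul_div_cancel₀ _ (Nat.cast_ne_zero.mpr k.factorial_ne_zero)]

lemma iteratedDeriv_one_sub_cpow_zero (A : ℂ) (k : ℕ) :
    iteratedDeriv k (fun z : ℂ => (1 - z) ^ A) 0 = (-1) ^ k * (k ! * Ring.choose A k) := by
  have h := iteratedDeriv_comp_neg k (fun z : ℂ => (1 + z) ^ A) 0
  simpa only [← sub_eq_add_neg, neg_zero, iteratedDeriv_one_add_cpow_zero, smul_eq_mul] using h

lemma iteratedDeriv_one_sub_cpow_mul_one_add_cpow_zero (A B : ℂ) (n : ℕ) :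
    iteratedDeriv n (fun z : ℂ => (1 - z) ^ B * (1 + z) ^ A) 0 =
      n ! * ∑ p ∈ antidiagonal n, (-1) ^ p.1 * (Ring.choose B p.1 * Ring.choose A p.2) := by
  rw [iteratedDeriv_fun_mul (contDiffAt_one_sub_cpow_zero B n) (contDiffAt_one_add_cpow_zero A n),
    ← Finset.Nat.sum_antidiagonal_eq_sum_range_succ (fun i j =>
      n.choose i * iteratedDeriv i (fun z : ℂ => (1 - z) ^ B) 0 *
        iteratedDeriv j (fun z : ℂ => (1 + z) ^ A) 0), mul_sum]
  refine sum_congr rfl fun p hp => ?_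
  have hn : (n.choose p.1 : ℂ) * (p.1 ! * p.2 !) = n ! := by
    rw [← mem_antidiagonal.mp hp, ← mul_assoc]
    exact_mod_cast Nat.choose_symm_add ▸ Nat.add_choose_mul_factorial_mul_factorial p.1 p.2
  rw [iteratedDeriv_one_sub_cpow_zero, iteratedDeriv_one_add_cpow_zero, ← hn]
  ring

lemma two_pow_mul_jacobiP_zero {a b : ℝ} (ha : -1 < a) (hb : -1 < b) (n : ℕ) :
    2 ^ n * jacobiP a b n 0 = ∑ p ∈ antidiagonal n,
      (-1) ^ p.1 * (Ring.choose (n + b) p.1 * Ring.choose (n + a) p.2) := by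
  rw [jacobiP_eq_sum_antidiagonal ha hb, mul_sum]
  refine sum_congr rfl fun p hp => ?_
  rw [jacobiCoeff, cast_fst_add_cast_snd hp, ← mem_antidiagonal.mp hp, pow_add, zero_sub, zero_add,
    neg_div, neg_pow, one_div, inv_pow, inv_pow]
  field_simp

lemma iteratedDeriv_eq_jacobiP_zero {a b : ℝ} (ha : -1 < a) (hb : -1 < b) (n : ℕ) :
    iteratedDeriv n (fun z : ℂ => (1 - z) ^ ((n + b : ℝ) : ℂ) * (1 + z) ^ ((n + a : ℝ) : ℂ)) 0 =
      (n ! * (2 ^ n * jacobiP a b n 0) : ℝ) := by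
  rw [iteratedDeriv_one_sub_cpow_mul_one_add_cpow_zero, two_pow_mul_jacobiP_zero ha hb]
  simp only [← Complex.ofReal_choose]
  push_cast
  rfl

lemma diffContOnCl_one_sub_cpow_mul_one_add_cpow {A B : ℝ} (hA : 0 < A) (hB : 0 < B) :
    DiffContOnCl ℂ (fun z : ℂ => (1 - z) ^ (B : ℂ) * (1 + z) ^ (A : ℂ)) (Metric.ball 0 1) := by
  refine ⟨fun z hz => ?_, fun z hz => ?_⟩
  · have hz' : ‖z‖ < 1 := by simpa using hz
    have hadd : 1 + z ∈ Complex.slitPlane := Complex.mem_slitPlane_of_norm_lt_one hz'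
    have hsub : 1 - z ∈ Complex.slitPlane := by
      simpa only [sub_eq_add_neg] using Complex.mem_slitPlane_of_norm_lt_one (z := -z) (by simpa)
    exact ((DifferentiableAt.cpow_const (by fun_prop) hsub).mul
      (DifferentiableAt.cpow_const (by fun_prop) hadd)).differentiableWithinAt
  · have hz' : ‖z‖ ≤ 1 := by simpa [closure_ball] using hz
    have hre := abs_le.mp ((Complex.abs_re_le_norm z).trans hz')
    have hadd := Complex.continuousAt_cpow_const_of_re_pos (z := 1 + z) (w := A)
      (.inl (by simp only [Complex.add_re, Complex.one_re]; linarith)) (by simpa)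
    have hsub := Complex.continuousAt_cpow_const_of_re_pos (z := 1 - z) (w := B)
      (.inl (by simp only [Complex.sub_re, Complex.one_re]; linarith)) (by simpa)
    exact ((hsub.comp (f := fun z => 1 - z) (by fun_prop)).mul
      (hadd.comp (f := fun z => 1 + z) (by fun_prop))).continuousWithinAt

lemma conj_cpow_ofReal {z : ℂ} (hz : 0 ≤ z.re) (A : ℝ) :
    conj z ^ (A : ℂ) = conj (z ^ (A : ℂ)) := by
  have harg : z.arg ≠ π := fun h => (Complex.arg_eq_pi_iff.mp h).1.not_ge hz
  rw [Complex.conj_cpow _ _ harg, Complex.conj_ofReal]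

lemma one_sub_cpow_mul_one_add_cpow_conj (A B : ℝ) {z : ℂ} (hz : ‖z‖ ≤ 1) :
    (1 - conj z) ^ (B : ℂ) * (1 + conj z) ^ (A : ℂ) =
      conj ((1 - z) ^ (B : ℂ) * (1 + z) ^ (A : ℂ)) := by
  have hre := abs_le.mp ((Complex.abs_re_le_norm z).trans hz)
  rw [map_mul, ← conj_cpow_ofReal (by simp only [Complex.sub_re, Complex.one_re]; linarith),
    ← conj_cpow_ofReal (by simp only [Complex.add_re, Complex.one_re]; linarith)]
  simp only [map_sub, map_add, map_one]

lemma one_add_exp_mul_I (t : ℝ) : 1 + Complex.exp (t * Complex.I) =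
    (2 * cos (t / 2) : ℝ) * Complex.exp ((t / 2 : ℝ) * Complex.I) := by
  push_cast
  rw [Complex.cos, mul_div_cancel₀ _ two_ne_zero, add_mul, ← Complex.exp_add, ← Complex.exp_add]
  ring_nf
  rw [Complex.exp_zero, add_comm]

lemma one_sub_exp_mul_I (t : ℝ) : 1 - Complex.exp (t * Complex.I) =
    (2 * sin (t / 2) : ℝ) * Complex.exp (((t - π) / 2 : ℝ) * Complex.I) := by
  rw [← cos_sub_pi_div_two, ← sub_div, ← one_add_exp_mul_I, Complex.ofReal_sub, sub_mul,
    Complex.exp_sub_pi_mul_I, sub_eq_add_neg]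

lemma ofReal_mul_exp_mul_I_cpow {r t : ℝ} (hr : 0 < r) (ht : t ∈ Set.Ioc (-π) π) (A : ℝ) :
    ((r : ℂ) * Complex.exp (t * Complex.I)) ^ (A : ℂ) =
      (r ^ A : ℝ) * Complex.exp ((A * t : ℝ) * Complex.I) := by
  have hexp := Complex.exp_ne_zero (t * Complex.I)
  rw [Complex.cpow_def_of_ne_zero (mul_ne_zero (Complex.ofReal_ne_zero.mpr hr.ne') hexp),
    Complex.log_ofReal_mul hr hexp, Complex.log_exp (by simpa using ht.1) (by simpa using ht.2),
    rpow_def_of_pos hr, Complex.ofReal_exp, ← Complex.exp_add]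
  push_cast
  ring_nf

lemma one_sub_cpow_mul_one_add_cpow_circleMap (A B : ℝ) {t : ℝ} (ht : t ∈ Set.Ioo 0 π) :
    (1 - circleMap 0 1 t) ^ (B : ℂ) * (1 + circleMap 0 1 t) ^ (A : ℂ) =
      ((2 * sin (t / 2)) ^ B * (2 * cos (t / 2)) ^ A : ℝ) *
        Complex.exp ((B * ((t - π) / 2) + A * (t / 2) : ℝ) * Complex.I) := by
  obtain ⟨h0, hπ⟩ := ht
  have hsin : 0 < sin (t / 2) := sin_pos_of_pos_of_lt_pi (by linarith) (by linarith)
  have hcos : 0 < cos (t / 2) := cos_pos_of_mem_Ioo ⟨by linarith, by linarith⟩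
  rw [circleMap_zero, Complex.ofReal_one, one_mul, one_sub_exp_mul_I, one_add_exp_mul_I,
    ofReal_mul_exp_mul_I_cpow (by positivity) ⟨by linarith, by linarith⟩,
    ofReal_mul_exp_mul_I_cpow (by positivity) ⟨by linarith, by linarith⟩,
    Complex.ofReal_add, add_mul, Complex.exp_add]
  push_cast
  ring

lemma re_one_sub_cpow_mul_one_add_cpow_circleMap_div (a b : ℝ) (n : ℕ) {t : ℝ}
    (ht : t ∈ Set.Ioo 0 π) :
    ((1 - circleMap 0 1 t) ^ ((n + b : ℝ) : ℂ) * (1 + circleMap 0 1 t) ^ ((n + a : ℝ) : ℂ) /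
      circleMap 0 1 t ^ n).re =
    2 ^ n * (sin t ^ n * (2 * cos (t / 2)) ^ a * (2 * sin (t / 2)) ^ b *
      cos ((a + b) / 2 * t - (n + b) * π / 2)) := by
  have hsin : 0 < sin (t / 2) :=
    sin_pos_of_pos_of_lt_pi (by linarith [ht.1]) (by linarith [ht.1, ht.2])
  have hcos : 0 < cos (t / 2) :=
    cos_pos_of_mem_Ioo ⟨by linarith [ht.1, ht.2], by linarith [ht.2]⟩
  rw [one_sub_cpow_mul_one_add_cpow_circleMap _ _ ht, circleMap_zero, Complex.ofReal_one, one_mul,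
    ← Complex.exp_nat_mul, mul_div_assoc, ← Complex.exp_sub,
    show ((((n + b) * ((t - π) / 2) + (n + a) * (t / 2) : ℝ) : ℂ) * Complex.I -
      n * (t * Complex.I)) = ((a + b) / 2 * t - (n + b) * π / 2 : ℝ) * Complex.I by
        push_cast; ring,
    Complex.re_ofReal_mul, Complex.exp_ofReal_mul_I_re, add_comm (n : ℝ) b, add_comm (n : ℝ) a,
    rpow_add_natCast (by positivity), rpow_add_natCast (by positivity),
    ← mul_div_cancel₀ t (two_ne_zero' ℝ), sin_two_mul, mul_div_cancel₀ t (two_ne_zero' ℝ)]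
  ring

theorem jacobiP_zero_eq_integral {a b : ℝ} (ha : -1 < a) (hb : -1 < b) {n : ℕ} (hna : 0 < n + a)
    (hnb : 0 < n + b) :
    jacobiP a b n 0 = π⁻¹ * ∫ t in (0 : ℝ)..π, sin t ^ n * (2 * cos (t / 2)) ^ a *
      (2 * sin (t / 2)) ^ b * cos ((a + b) / 2 * t - (n + b) * π / 2) := by
  have h := iteratedDeriv_zero_eq_integral_re
    (diffContOnCl_one_sub_cpow_mul_one_add_cpow hna hnb)
    (fun z hz => one_sub_cpow_mul_one_add_cpow_conj _ _ hz) n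
  rw [iteratedDeriv_eq_jacobiP_zero ha hb, Complex.ofReal_inj,
    mul_right_inj' (Nat.cast_ne_zero.mpr n.factorial_ne_zero),
    intervalIntegral.integral_congr_Ioo_of_le pi_pos.le fun t ht =>
      re_one_sub_cpow_mul_one_add_cpow_circleMap_div a b n ht,
    intervalIntegral.integral_const_mul, mul_left_comm] at h
  exact mul_left_cancel₀ (by positivity) h

end ValueAtZero

section Wallis

/-- The Wallis integral `∫₀^π sin^m`, the total mass of the Laplace kernel `sin^m`. -/
noncomputable def wallisIntegral (m : ℕ) : ℝ := ∫ x in (0 : ℝ)..π, sin x ^ m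

lemma wallisIntegral_pos (m : ℕ) : 0 < wallisIntegral m := integral_sin_pow_pos m

lemma wallisIntegral_succ_le (m : ℕ) : wallisIntegral (m + 1) ≤ wallisIntegral m :=
  integral_sin_pow_succ_le m

lemma wallisIntegral_add_two (m : ℕ) :
    wallisIntegral (m + 2) = (m + 1) / (m + 2) * wallisIntegral m := by
  simp [wallisIntegral, integral_sin_pow]

lemma wallisIntegral_mul_succ (m : ℕ) :
    wallisIntegral m * wallisIntegral (m + 1) = 2 * π / (m + 1) := by
  induction m with
  | zero => norm_num [wallisIntegral, mul_comm]
  | succ m ih =>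
    rw [wallisIntegral_add_two, mul_left_comm, mul_comm (wallisIntegral (m + 1)), ih]
    push_cast
    field_simp
    ring

lemma sqrt_le_wallisIntegral (m : ℕ) : √(2 * π / (m + 1)) ≤ wallisIntegral m := by
  refine sqrt_le_iff.mpr ⟨(wallisIntegral_pos m).le, ?_⟩
  rw [← wallisIntegral_mul_succ, sq]
  exact mul_le_mul_of_nonneg_left (wallisIntegral_succ_le m) (wallisIntegral_pos m).le

lemma wallisIntegral_le_sqrt_mul (m : ℕ) :
    wallisIntegral m ≤ √(2 * π / (m + 1)) * (1 + 1 / (m + 1)) := by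
  have hsq : wallisIntegral m ^ 2 ≤ 2 * π / (m + 1) * (1 + 1 / (m + 1)) := by
    have h := wallisIntegral_succ_le (m + 1)
    rw [wallisIntegral_add_two, div_mul_eq_mul_div, div_le_iff₀ (by positivity)] at h
    rw [← wallisIntegral_mul_succ]
    field_simp
    linarith [mul_le_mul_of_nonneg_left h (wallisIntegral_pos m).le]
  refine (Real.le_sqrt_of_sq_le hsq).trans ?_
  rw [sqrt_mul (by positivity)]
  gcongr
  exact sqrt_le_iff.mpr ⟨by positivity,
    le_self_pow₀ (le_add_of_nonneg_right (by positivity)) two_ne_zero⟩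

lemma abs_wallisIntegral_sub_sqrt_le (m : ℕ) :
    |wallisIntegral m - √(2 * π / (m + 1))| ≤ √(2 * π / (m + 1)) / (m + 1) := by
  rw [abs_of_nonneg (sub_nonneg.mpr (sqrt_le_wallisIntegral m)), sub_le_iff_le_add]
  exact (wallisIntegral_le_sqrt_mul m).trans_eq (by ring)

lemma integral_sin_pow_mul_cos_sq_le (m : ℕ) :
    ∫ x in (0 : ℝ)..π, sin x ^ m * cos x ^ 2 ≤ √(2 * π / (m + 1)) / (m + 1) := by
  have hW : ∫ x in (0 : ℝ)..π, sin x ^ m * cos x ^ 2 =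
      wallisIntegral m - wallisIntegral (m + 2) := by
    simp only [cos_sq', mul_sub, mul_one, ← pow_add]
    exact intervalIntegral.integral_sub (Continuous.intervalIntegrable (by fun_prop) _ _)
      (Continuous.intervalIntegrable (by fun_prop) _ _)
  have hle := wallisIntegral_le_sqrt_mul m
  rw [hW, wallisIntegral_add_two]
  calc wallisIntegral m - (m + 1) / (m + 2) * wallisIntegral m
      = wallisIntegral m / (m + 2) := by field_simp; ring
    _ ≤ √(2 * π / (m + 1)) * (1 + 1 / (m + 1)) / (m + 2) := by gcongr
    _ = √(2 * π / (m + 1)) / (m + 1) := by field_simp; ring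

end Wallis

section Laplace

variable {E : Type*} [NormedAddCommGroup E]

lemma isBigO_principal_of_forall_nhdsWithin {X F : Type*} [TopologicalSpace X]
    [NormedAddCommGroup F] {s : Set X} {f : X → E} {g : X → F} (hs : IsCompact s)
    (h : ∀ x ∈ s, f =O[𝓝[s] x] g) : f =O[𝓟 s] g := by
  refine hs.induction_on (p := fun t => f =O[𝓟 t] g) (by simp)
    (fun t u htu hu => hu.mono (Filter.principal_mono.mpr htu))
    (fun t u ht hu => by simpa using! ht.sup hu) fun x hx => ?_
  obtain ⟨c, hc⟩ := (h x hx).bound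
  exact ⟨_, hc, .of_bound c (Filter.eventually_principal.mpr fun y hy => hy)⟩

variable [NormedSpace ℝ E]

lemma isBigO_sub_sub_smul_deriv {f : ℝ → E} {x₀ : ℝ} (hf : ContDiffAt ℝ 2 f x₀) :
    (fun x => f x - f x₀ - (x - x₀) • deriv f x₀) =O[𝓝 x₀] fun x => (x - x₀) ^ 2 := by
  have hderiv : ContDiffAt ℝ 1 (deriv f) x₀ := by
    simpa only [← fderiv_apply_one_eq_deriv] using!
      (hf.fderiv_right (m := 1) (by norm_num)).clm_apply contDiffAt_const
  have hdiff : ∀ᶠ x in 𝓝 x₀, DifferentiableAt ℝ f x :=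
    (hf.eventually (by simp)).mono fun x hx => hx.differentiableAt (by simp)
  obtain ⟨C, hC, hbound⟩ := (hderiv.differentiableAt (by simp)).isBigO_sub.exists_nonneg
  obtain ⟨δ, hδ, hball⟩ := Metric.eventually_nhds_iff_ball.mp (hbound.bound.and hdiff)
  refine .of_bound C (Metric.eventually_nhds_iff_ball.mpr ⟨δ, hδ, fun x hx => ?_⟩)
  have hsub : Metric.closedBall x₀ |x - x₀| ⊆ Metric.ball x₀ δ :=
    Metric.closedBall_subset_ball hx
  have hmean := (convex_closedBall x₀ |x - x₀|).norm_image_sub_le_of_norm_hasDerivWithin_le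
    (f := fun y => f y - f x₀ - (y - x₀) • deriv f x₀) (C := C * ‖x - x₀‖)
    (fun y hy => (((hball y (hsub hy)).2.hasDerivAt.sub_const _).sub
      (((hasDerivAt_id y).sub_const x₀).smul_const _)).hasDerivWithinAt)
    (fun y hy => ?_) (Metric.mem_closedBall_self (abs_nonneg _)) (Metric.mem_closedBall.mpr le_rfl)
  · simpa [sq, mul_assoc] using hmean
  · rw [one_smul]
    exact (hball y (hsub hy)).1.trans (mul_le_mul_of_nonneg_left (by simpa using! hy) hC)

lemma isBigO_sub_half_pi_cos : (fun x => x - π / 2) =O[𝓝 (π / 2)] cos := by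
  have htheta := (hasDerivAt_cos (π / 2)).isTheta_sub (by simp)
  simpa [Function.comp_def] using! htheta.isBigO_symm

lemma exists_norm_sub_sub_smul_deriv_le_mul_cos_sq {K : ℝ → E}
    (hcont : ContinuousOn K (Set.Icc 0 π)) (hdiff : ContDiffAt ℝ 2 K (π / 2)) :
    ∃ C, ∀ x ∈ Set.Icc 0 π,
      ‖K x - K (π / 2) - (x - π / 2) • deriv K (π / 2)‖ ≤ C * cos x ^ 2 := by
  have hlocal : ∀ x ∈ Set.Icc 0 π, (fun x => K x - K (π / 2) - (x - π / 2) • deriv K (π / 2))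
      =O[𝓝[Set.Icc 0 π] x] fun x => cos x ^ 2 := by
    intro x hx
    obtain rfl | hne := eq_or_ne x (π / 2)
    · exact ((isBigO_sub_sub_smul_deriv hdiff).trans (isBigO_sub_half_pi_cos.pow 2)).mono
        nhdsWithin_le_nhds
    · have hcos : cos x ≠ 0 := by
        rw [← cos_pi_div_two]
        exact fun h => hne (injOn_cos hx ⟨by positivity, by linarith [pi_pos]⟩ h)
      have hcos_tendsto : Tendsto (fun x => cos x ^ 2) (𝓝[Set.Icc 0 π] x) (𝓝 (cos x ^ 2)) :=
        (by fun_prop : Continuous fun x => cos x ^ 2).continuousWithinAt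
      have hrem : ContinuousOn (fun x => K x - K (π / 2) - (x - π / 2) • deriv K (π / 2))
          (Set.Icc 0 π) := by fun_prop
      exact (Asymptotics.isBigO_const_of_tendsto (hrem x hx) (pow_ne_zero 2 hcos)).trans
        ((Asymptotics.isEquivalent_const_iff_tendsto (pow_ne_zero 2 hcos)).mpr
          hcos_tendsto).isBigO_symm
  simpa using
    Asymptotics.isBigO_principal.mp (isBigO_principal_of_forall_nhdsWithin isCompact_Icc hlocal)

lemma integral_sin_pow_mul_sub_half_pi (m : ℕ) :
    ∫ x in (0 : ℝ)..π, sin x ^ m * (x - π / 2) = 0 := by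
  have hodd := intervalIntegral.integral_comp_sub_left (a := 0) (b := π)
    (fun x => sin x ^ m * (x - π / 2)) π
  have hneg : ∀ x : ℝ, sin (π - x) ^ m * (π - x - π / 2) = -(sin x ^ m * (x - π / 2)) := by
    intro x
    rw [sin_pi_sub]
    ring
  simp only [hneg, intervalIntegral.integral_neg, sub_self, sub_zero] at hodd
  linarith

theorem exists_norm_integral_sin_pow_smul_sub_le [CompleteSpace E] {K : ℝ → E}
    (hcont : ContinuousOn K (Set.Icc 0 π)) (hdiff : ContDiffAt ℝ 2 K (π / 2)) :
    ∃ C, ∀ m : ℕ, ‖(∫ x in (0 : ℝ)..π, sin x ^ m • K x) - √(2 * π / (m + 1)) • K (π / 2)‖ ≤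
      C * (√(2 * π / (m + 1)) / (m + 1)) := by
  obtain ⟨C, hC⟩ := exists_norm_sub_sub_smul_deriv_le_mul_cos_sq hcont hdiff
  refine ⟨C + ‖K (π / 2)‖, fun m => ?_⟩
  have hC0 : 0 ≤ C := by simpa using (norm_nonneg _).trans (hC 0 ⟨le_rfl, pi_pos.le⟩)
  have hK : IntervalIntegrable (fun x => sin x ^ m • K x) volume 0 π := by
    refine ContinuousOn.intervalIntegrable ?_
    rw [Set.uIcc_of_le pi_pos.le]
    fun_prop
  have hsplit : (∫ x in (0 : ℝ)..π, sin x ^ m • K x) - wallisIntegral m • K (π / 2) =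
      ∫ x in (0 : ℝ)..π, sin x ^ m • (K x - K (π / 2) - (x - π / 2) • deriv K (π / 2)) := by
    have hconst : IntervalIntegrable (fun x => sin x ^ m • K (π / 2)) volume 0 π :=
      Continuous.intervalIntegrable (by fun_prop) _ _
    have hlinear : IntervalIntegrable
        (fun x => (sin x ^ m * (x - π / 2)) • deriv K (π / 2)) volume 0 π :=
      Continuous.intervalIntegrable (by fun_prop) _ _
    simp only [smul_sub, smul_smul]
    rw [intervalIntegral.integral_sub (hK.sub hconst) hlinear,
      intervalIntegral.integral_sub hK hconst, intervalIntegral.integral_smul_const,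
      intervalIntegral.integral_smul_const, integral_sin_pow_mul_sub_half_pi, zero_smul, sub_zero,
      wallisIntegral]
  have hrem : ‖(∫ x in (0 : ℝ)..π, sin x ^ m • K x) - wallisIntegral m • K (π / 2)‖ ≤
      C * ∫ x in (0 : ℝ)..π, sin x ^ m * cos x ^ 2 := by
    rw [hsplit, ← intervalIntegral.integral_const_mul]
    refine intervalIntegral.norm_integral_le_of_norm_le pi_pos.le
      (.of_forall fun x hx => ?_) (Continuous.intervalIntegrable (by fun_prop) _ _)
    have hsin : 0 ≤ sin x ^ m := pow_nonneg (sin_nonneg_of_nonneg_of_le_pi hx.1.le hx.2) m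
    rw [norm_smul, norm_of_nonneg hsin, mul_left_comm]
    exact mul_le_mul_of_nonneg_left (hC x ⟨hx.1.le, hx.2⟩) hsin
  calc _ ≤ ‖(∫ x in (0 : ℝ)..π, sin x ^ m • K x) - wallisIntegral m • K (π / 2)‖ +
        ‖(wallisIntegral m - √(2 * π / (m + 1))) • K (π / 2)‖ := by
        rw [sub_smul]
        exact norm_sub_le_norm_sub_add_norm_sub _ _ _
    _ ≤ C * (√(2 * π / (m + 1)) / (m + 1)) + √(2 * π / (m + 1)) / (m + 1) * ‖K (π / 2)‖ := by
        rw [norm_smul]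
        gcongr
        · exact hrem.trans (mul_le_mul_of_nonneg_left (integral_sin_pow_mul_cos_sq_le m) hC0)
        · exact abs_wallisIntegral_sub_sqrt_le m
    _ = _ := by ring

end Laplace

section EndpointKernel

/-- The factor `(2 cos (t/2))^p (2 sin (t/2))^q` that multiplies `sin^m` in the integral for a
Jacobi polynomial at `0`; the exponents are positive, so that it is continuous on `[0, π]`. -/
noncomputable def endpointFactor (p q t : ℝ) : ℝ := (2 * cos (t / 2)) ^ p * (2 * sin (t / 2)) ^ q

lemma continuous_endpointFactor {p q : ℝ} (hp : 0 ≤ p) (hq : 0 ≤ q) :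
    Continuous (endpointFactor p q) :=
  ((by fun_prop : Continuous fun t => 2 * cos (t / 2)).rpow_const fun _ => .inr hp).mul
    ((by fun_prop : Continuous fun t => 2 * sin (t / 2)).rpow_const fun _ => .inr hq)

lemma two_mul_cos_half_pi_half : 2 * cos (π / 2 / 2) = √2 := by
  rw [div_div, show (2 * 2 : ℝ) = 4 by norm_num, cos_pi_div_four]
  ring

lemma two_mul_sin_half_pi_half : 2 * sin (π / 2 / 2) = √2 := by
  rw [div_div, show (2 * 2 : ℝ) = 4 by norm_num, sin_pi_div_four]
  ring

lemma contDiffAt_endpointFactor (p q : ℝ) : ContDiffAt ℝ 2 (endpointFactor p q) (π / 2) := by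
  refine (ContDiffAt.rpow_const_of_ne ?_ ?_).mul (ContDiffAt.rpow_const_of_ne ?_ ?_)
  · fun_prop
  · simp [two_mul_cos_half_pi_half]
  · fun_prop
  · simp [two_mul_sin_half_pi_half]

lemma endpointFactor_half_pi (p q : ℝ) : endpointFactor p q (π / 2) = 2 ^ ((p + q) / 2) := by
  rw [endpointFactor, two_mul_cos_half_pi_half, two_mul_sin_half_pi_half,
    ← rpow_add (by positivity), sqrt_eq_rpow, ← rpow_mul zero_le_two]
  ring_nf

lemma exists_abs_integral_sin_pow_mul_endpointFactor_sub_le {p q : ℝ} (hp : 0 ≤ p) (hq : 0 ≤ q)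
    (μ : ℝ) :
    ∃ C, ∀ (m : ℕ) (ν : ℝ),
      |(∫ t in (0 : ℝ)..π, sin t ^ m * (endpointFactor p q t * cos (μ * t - ν))) -
          √(2 * π / (m + 1)) * (2 ^ ((p + q) / 2) * cos (μ * (π / 2) - ν))| ≤
        C * (√(2 * π / (m + 1)) / (m + 1)) := by
  have hcont : Continuous (endpointFactor p q) := continuous_endpointFactor hp hq
  have hsmooth := contDiffAt_endpointFactor p q
  obtain ⟨C₁, hC₁⟩ := exists_norm_integral_sin_pow_smul_sub_le
    (K := fun t => endpointFactor p q t * cos (μ * t)) (by fun_prop) (by fun_prop)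
  obtain ⟨C₂, hC₂⟩ := exists_norm_integral_sin_pow_smul_sub_le
    (K := fun t => endpointFactor p q t * sin (μ * t)) (by fun_prop) (by fun_prop)
  refine ⟨C₁ + C₂, fun m ν => ?_⟩
  specialize hC₁ m
  specialize hC₂ m
  simp only [smul_eq_mul, norm_eq_abs, endpointFactor_half_pi] at hC₁ hC₂
  have hexpand : ∫ t in (0 : ℝ)..π, sin t ^ m * (endpointFactor p q t * cos (μ * t - ν)) =
      cos ν * (∫ t in (0 : ℝ)..π, sin t ^ m * (endpointFactor p q t * cos (μ * t))) +
        sin ν * ∫ t in (0 : ℝ)..π, sin t ^ m * (endpointFactor p q t * sin (μ * t)) := by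
    rw [← intervalIntegral.integral_const_mul, ← intervalIntegral.integral_const_mul,
      ← intervalIntegral.integral_add (Continuous.intervalIntegrable (by fun_prop) _ _)
        (Continuous.intervalIntegrable (by fun_prop) _ _)]
    refine intervalIntegral.integral_congr fun t _ => ?_
    simp only [cos_sub]
    ring
  rw [hexpand, cos_sub, add_mul]
  calc _ = |cos ν * ((∫ t in (0 : ℝ)..π, sin t ^ m * (endpointFactor p q t * cos (μ * t))) -
          √(2 * π / (m + 1)) * (2 ^ ((p + q) / 2) * cos (μ * (π / 2)))) +
        sin ν * ((∫ t in (0 : ℝ)..π, sin t ^ m * (endpointFactor p q t * sin (μ * t))) -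
          √(2 * π / (m + 1)) * (2 ^ ((p + q) / 2) * sin (μ * (π / 2))))| := by ring_nf
    _ ≤ _ := (abs_add_le _ _).trans <| by
      rw [abs_mul, abs_mul]
      exact add_le_add
        ((mul_le_of_le_one_left (abs_nonneg _) (abs_cos_le_one ν)).trans hC₁)
        ((mul_le_of_le_one_left (abs_nonneg _) (abs_sin_le_one ν)).trans hC₂)

end EndpointKernel

section NormalForm

/-- The factor `sin(θ/2)^(a+1/2) cos(θ/2)^(b+1/2)` that removes the first-order term from the
Jacobi differential equation in the variable `θ`. -/
noncomputable def liouvilleWeight (a b θ : ℝ) : ℝ :=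
  sin (θ / 2) ^ (a + 1 / 2) * cos (θ / 2) ^ (b + 1 / 2)

/-- The Liouville normal form of the Jacobi polynomial of degree `n` in the variable `θ`. -/
noncomputable def jacobiNormalForm (a b : ℝ) (n : ℕ) (θ : ℝ) : ℝ :=
  liouvilleWeight a b θ * jacobiP a b n (cos θ)

lemma liouvilleWeight_half_pi (a b : ℝ) :
    liouvilleWeight a b (π / 2) = 2 ^ (-((a + b + 1) / 2)) := by
  have hsqrt : √2 / 2 = (2 : ℝ) ^ (-(1 / 2 : ℝ)) := by
    rw [rpow_neg zero_le_two, ← sqrt_eq_rpow, sqrt_div_self']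
    simp
  rw [liouvilleWeight, div_div, show (2 * 2 : ℝ) = 4 by norm_num, sin_pi_div_four, cos_pi_div_four,
    ← rpow_add (by positivity), hsqrt, ← rpow_mul zero_le_two]
  ring_nf

end NormalForm

section ValuesAtZero

variable {a b : ℝ}

lemma jacobiP_succ_zero_eq_integral (ha : -1 < a) (hb : -1 < b) (m : ℕ) :
    jacobiP a b (m + 1) 0 = (2 * π)⁻¹ * ∫ t in (0 : ℝ)..π, sin t ^ m *
      (endpointFactor (a + 1) (b + 1) t * cos ((a + b) / 2 * t - (m + 1 + b) * π / 2)) := by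
  have : (0 : ℝ) ≤ m := m.cast_nonneg
  rw [jacobiP_zero_eq_integral ha hb (by push_cast; linarith) (by push_cast; linarith), mul_inv,
    mul_comm 2⁻¹, mul_assoc π⁻¹, ← intervalIntegral.integral_const_mul 2⁻¹]
  refine congrArg (π⁻¹ * ·) (intervalIntegral.integral_congr fun t ht => ?_)
  rw [Set.uIcc_of_le pi_pos.le] at ht
  have hcos : 0 ≤ 2 * cos (t / 2) :=
    mul_nonneg zero_le_two (cos_nonneg_of_mem_Icc ⟨by linarith [pi_pos, ht.1], by linarith [ht.2]⟩)
  have hsin : 0 ≤ 2 * sin (t / 2) :=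
    mul_nonneg zero_le_two (sin_nonneg_of_nonneg_of_le_pi (by linarith [ht.1])
      (by linarith [ht.1, ht.2]))
  have hdouble : sin t = 2 * sin (t / 2) * cos (t / 2) := by rw [← sin_two_mul]; ring_nf
  simp only [endpointFactor, rpow_add_one' hcos (by linarith : a + 1 ≠ 0),
    rpow_add_one' hsin (by linarith : b + 1 ≠ 0)]
  rw [pow_succ]
  nth_rewrite 2 [hdouble]
  push_cast
  ring

lemma jacobiP_add_one_zero_eq_integral (ha : -1 < a) (hb : -1 < b) (m : ℕ) :
    jacobiP (a + 1) (b + 1) m 0 = π⁻¹ * ∫ t in (0 : ℝ)..π, sin t ^ m *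
      (endpointFactor (a + 1) (b + 1) t * cos (((a + b) / 2 + 1) * t - (m + 1 + b) * π / 2)) := by
  have : (0 : ℝ) ≤ m := m.cast_nonneg
  rw [jacobiP_zero_eq_integral (by linarith) (by linarith) (by linarith) (by linarith)]
  refine congrArg (π⁻¹ * ·) (intervalIntegral.integral_congr fun t _ => ?_)
  simp only [endpointFactor]
  ring_nf

/-- The phase of `P_n^{(a,b)}(cos θ)` at `θ = π / 2`. -/
noncomputable def midpointPhase (a b : ℝ) (n : ℕ) : ℝ := (a - b) * π / 4 - n * π / 2

lemma abs_mul_sub_le_mul {k x y z B : ℝ} (hk : 0 ≤ k) (h : |x - y| ≤ B) (hz : k * y = z) :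
    |k * x - z| ≤ k * B := by
  rw [← hz, ← mul_sub, abs_mul, abs_of_nonneg hk]
  exact mul_le_mul_of_nonneg_left h hk

lemma sqrt_two_pi_div (x : ℝ) : √(2 * π / x) = √2 * π * (√(π * x))⁻¹ := by
  rw [← div_eq_mul_inv, ← sqrt_sq pi_pos.le, ← sqrt_mul zero_le_two, ← sqrt_div (by positivity),
    sqrt_sq pi_pos.le]
  congr 1
  field_simp

lemma exists_abs_jacobiNormalForm_half_pi_sub_le (ha : -1 < a) (hb : -1 < b) :
    ∃ C, ∀ m : ℕ, |jacobiNormalForm a b (m + 1) (π / 2) -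
      (√(π * (m + 1)))⁻¹ * cos (midpointPhase a b (m + 1))| ≤
        C * ((√(π * (m + 1)))⁻¹ / (m + 1)) := by
  obtain ⟨C, hC⟩ := exists_abs_integral_sin_pow_mul_endpointFactor_sub_le
    (by linarith : 0 ≤ a + 1) (by linarith : 0 ≤ b + 1) ((a + b) / 2)
  have hscale : (2 : ℝ) ^ (-((a + b + 1) / 2)) * (2 * π)⁻¹ *
      (√2 * π * 2 ^ ((a + 1 + (b + 1)) / 2)) = 1 := by
    have hpow : (2 : ℝ) ^ (-((a + b + 1) / 2)) * √2 * 2 ^ ((a + 1 + (b + 1)) / 2) = 2 := by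
      rw [sqrt_eq_rpow, ← rpow_add zero_lt_two, ← rpow_add zero_lt_two]
      ring_nf
      exact rpow_one 2
    field_simp
    linear_combination hpow
  refine ⟨2 ^ (-((a + b + 1) / 2)) * (2 * π)⁻¹ * (C * (√2 * π)), fun m => ?_⟩
  have hphase : (a + b) / 2 * (π / 2) - (m + 1 + b) * π / 2 = midpointPhase a b (m + 1) := by
    rw [midpointPhase]
    push_cast
    ring
  specialize hC m ((m + 1 + b) * π / 2)
  rw [hphase, sqrt_two_pi_div] at hC
  rw [jacobiNormalForm, cos_pi_div_two, jacobiP_succ_zero_eq_integral ha hb,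
    liouvilleWeight_half_pi]
  rw [← mul_assoc]
  refine (abs_mul_sub_le_mul (by positivity) hC ?_).trans_eq (by ring)
  linear_combination (√(π * (m + 1)))⁻¹ * cos (midpointPhase a b (m + 1)) * hscale

lemma exists_abs_jacobiNormalForm_add_one_half_pi_add_le (ha : -1 < a) (hb : -1 < b) :
    ∃ C, ∀ m : ℕ, |jacobiNormalForm (a + 1) (b + 1) m (π / 2) +
      (√(π * (m + 1)))⁻¹ * sin (midpointPhase a b (m + 1))| ≤
        C * ((√(π * (m + 1)))⁻¹ / (m + 1)) := by
  obtain ⟨C, hC⟩ := exists_abs_integral_sin_pow_mul_endpointFactor_sub_le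
    (by linarith : 0 ≤ a + 1) (by linarith : 0 ≤ b + 1) ((a + b) / 2 + 1)
  have hscale : (2 : ℝ) ^ (-((a + 1 + (b + 1) + 1) / 2)) * π⁻¹ *
      (√2 * π * 2 ^ ((a + 1 + (b + 1)) / 2)) = 1 := by
    have hpow : (2 : ℝ) ^ (-((a + 1 + (b + 1) + 1) / 2)) * √2 *
        2 ^ ((a + 1 + (b + 1)) / 2) = 1 := by
      rw [sqrt_eq_rpow, ← rpow_add zero_lt_two, ← rpow_add zero_lt_two]
      ring_nf
      exact rpow_zero 2
    field_simp
    linear_combination hpow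
  refine ⟨2 ^ (-((a + 1 + (b + 1) + 1) / 2)) * π⁻¹ * (C * (√2 * π)), fun m => ?_⟩
  have hphase : ((a + b) / 2 + 1) * (π / 2) - (m + 1 + b) * π / 2 =
      midpointPhase a b (m + 1) + π / 2 := by
    rw [midpointPhase]
    push_cast
    ring
  specialize hC m ((m + 1 + b) * π / 2)
  rw [hphase, cos_add_pi_div_two, sqrt_two_pi_div] at hC
  rw [jacobiNormalForm, cos_pi_div_two, jacobiP_add_one_zero_eq_integral ha hb,
    liouvilleWeight_half_pi]
  rw [← mul_assoc, ← sub_neg_eq_add]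
  refine (abs_mul_sub_le_mul (by positivity) hC ?_).trans_eq (by ring)
  linear_combination -(√(π * (m + 1)))⁻¹ * sin (midpointPhase a b (m + 1)) * hscale

end ValuesAtZero

section DifferentialEquation

/-- The logarithmic derivative of `liouvilleWeight a b`. -/
noncomputable def liouvilleLogDeriv (a b θ : ℝ) : ℝ :=
  ((a + 1 / 2) * (cos (θ / 2) / sin (θ / 2)) - (b + 1 / 2) * (sin (θ / 2) / cos (θ / 2))) / 2

/-- The potential `g` in the equation `U'' + (N² + g) U = 0` satisfied by the Liouville normal
form of a Jacobi polynomial. -/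
noncomputable def liouvillePotential (a b θ : ℝ) : ℝ :=
  (1 / 4 - a ^ 2) / (4 * sin (θ / 2) ^ 2) + (1 / 4 - b ^ 2) / (4 * cos (θ / 2) ^ 2)

/-- The frequency `N = n + (a + b + 1) / 2` of the oscillations of `P_n^{(a,b)}(cos θ)`. -/
noncomputable def jacobiFrequency (a b : ℝ) (n : ℕ) : ℝ := n + (a + b + 1) / 2

/-- The derivative of `jacobiNormalForm a b (m + 1)`, expressed without differentiation. -/
noncomputable def jacobiNormalFormDeriv (a b : ℝ) (m : ℕ) (θ : ℝ) : ℝ :=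
  liouvilleLogDeriv a b θ * jacobiNormalForm a b (m + 1) θ -
    (m + a + b + 2) * jacobiNormalForm (a + 1) (b + 1) m θ

variable {a b θ : ℝ}

lemma sin_half_pos (hθ : θ ∈ Set.Ioo 0 π) : 0 < sin (θ / 2) :=
  sin_pos_of_pos_of_lt_pi (by linarith [hθ.1]) (by linarith [hθ.1, hθ.2])

lemma cos_half_pos (hθ : θ ∈ Set.Ioo 0 π) : 0 < cos (θ / 2) :=
  cos_pos_of_mem_Ioo ⟨by linarith [hθ.1, hθ.2], by linarith [hθ.2]⟩

lemma hasDerivAt_sin_half (θ : ℝ) : HasDerivAt (fun t => sin (t / 2)) (cos (θ / 2) / 2) θ := by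
  simpa [div_eq_mul_inv] using ((hasDerivAt_id θ).div_const 2).sin

lemma hasDerivAt_cos_half (θ : ℝ) : HasDerivAt (fun t => cos (t / 2)) (-sin (θ / 2) / 2) θ := by
  simpa [div_eq_mul_inv] using ((hasDerivAt_id θ).div_const 2).cos

lemma hasDerivAt_liouvilleWeight (a b : ℝ) (hθ : θ ∈ Set.Ioo 0 π) :
    HasDerivAt (liouvilleWeight a b) (liouvilleLogDeriv a b θ * liouvilleWeight a b θ) θ := by
  have hs := sin_half_pos hθ
  have hc := cos_half_pos hθ
  have hderiv := ((hasDerivAt_sin_half θ).rpow_const (p := a + 1 / 2) (.inl hs.ne')).mul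
    ((hasDerivAt_cos_half θ).rpow_const (p := b + 1 / 2) (.inl hc.ne'))
  refine hderiv.congr_deriv ?_
  rw [rpow_sub_one hs.ne', rpow_sub_one hc.ne', liouvilleLogDeriv, liouvilleWeight]
  field_simp
  ring

lemma liouvilleWeight_add_one (a b : ℝ) (hθ : θ ∈ Set.Ioo 0 π) :
    liouvilleWeight (a + 1) (b + 1) θ = liouvilleWeight a b θ * (sin θ / 2) := by
  have hdouble : sin θ / 2 = sin (θ / 2) * cos (θ / 2) := by
    rw [← mul_div_cancel₀ θ (two_ne_zero' ℝ), sin_two_mul]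
    ring_nf
  rw [liouvilleWeight, liouvilleWeight, add_right_comm, add_right_comm b,
    rpow_add_one (sin_half_pos hθ).ne', rpow_add_one (cos_half_pos hθ).ne', hdouble]
  ring

lemma liouvilleLogDeriv_add_one (a b : ℝ) (hθ : θ ∈ Set.Ioo 0 π) :
    liouvilleLogDeriv (a + 1) (b + 1) θ * sin θ =
      (a + 1) * (1 + cos θ) - (b + 1) * (1 - cos θ) - liouvilleLogDeriv a b θ * sin θ := by
  have hs := sin_half_pos hθ
  have hc := cos_half_pos hθ
  rw [liouvilleLogDeriv, liouvilleLogDeriv, ← mul_div_cancel₀ θ (two_ne_zero' ℝ), sin_two_mul,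
    cos_two_mul', mul_div_cancel₀ θ (two_ne_zero' ℝ)]
  field_simp
  linear_combination 2 * (a - b) * sin_sq_add_cos_sq (θ / 2)

lemma hasDerivAt_jacobiNormalForm_succ (ha : -1 < a) (hb : -1 < b) (m : ℕ)
    (hθ : θ ∈ Set.Ioo 0 π) :
    HasDerivAt (jacobiNormalForm a b (m + 1)) (jacobiNormalFormDeriv a b m θ) θ := by
  refine ((hasDerivAt_liouvilleWeight a b hθ).mul
    ((hasDerivAt_jacobiP_succ ha hb m (cos θ)).comp θ (hasDerivAt_cos θ))).congr_deriv ?_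
  rw [jacobiNormalFormDeriv, jacobiNormalForm, jacobiNormalForm, liouvilleWeight_add_one a b hθ,
    Function.comp_apply]
  ring

lemma hasDerivAt_jacobiNormalForm_add_one (ha : -1 < a) (hb : -1 < b) (m : ℕ)
    (hθ : θ ∈ Set.Ioo 0 π) :
    HasDerivAt (jacobiNormalForm (a + 1) (b + 1) m)
      (-liouvilleLogDeriv a b θ * jacobiNormalForm (a + 1) (b + 1) m θ +
        (m + 1) * jacobiNormalForm a b (m + 1) θ) θ := by
  have hsin : sin θ ≠ 0 := (sin_pos_of_mem_Ioo hθ).ne'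
  have hP : HasDerivAt (jacobiP (a + 1) (b + 1) m)
      (deriv (jacobiP (a + 1) (b + 1) m) (cos θ)) (cos θ) :=
    (hasDerivAt_jacobiP (by linarith) (by linarith) m (cos θ)).differentiableAt.hasDerivAt
  have hode := one_sub_sq_mul_deriv_jacobiP ha hb m (cos θ)
  rw [← sin_sq] at hode
  refine ((hasDerivAt_liouvilleWeight (a + 1) (b + 1) hθ).mul
    (hP.comp θ (hasDerivAt_cos θ))).congr_deriv ?_
  apply mul_left_cancel₀ hsin
  have hlog := liouvilleLogDeriv_add_one a b hθ
  simp only [jacobiNormalForm, liouvilleWeight_add_one a b hθ, Function.comp_apply]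
  linear_combination liouvilleWeight a b θ * (sin θ / 2) * jacobiP (a + 1) (b + 1) m (cos θ) * hlog
    - liouvilleWeight a b θ * (sin θ / 2) * hode

lemma hasDerivAt_liouvilleLogDeriv (a b : ℝ) (hθ : θ ∈ Set.Ioo 0 π) :
    HasDerivAt (liouvilleLogDeriv a b)
      (-(liouvillePotential a b θ + ((a + b + 1) / 2) ^ 2 + liouvilleLogDeriv a b θ ^ 2)) θ := by
  have hs := (sin_half_pos hθ).ne'
  have hc := (cos_half_pos hθ).ne'
  have hcot := (hasDerivAt_cos_half θ).div (hasDerivAt_sin_half θ) hs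
  have htan := (hasDerivAt_sin_half θ).div (hasDerivAt_cos_half θ) hc
  refine (((hcot.const_mul (a + 1 / 2)).sub (htan.const_mul (b + 1 / 2))).div_const
    2).congr_deriv ?_
  rw [liouvillePotential, liouvilleLogDeriv]
  field_simp
  linear_combination ((64 * a ^ 2 - 16) * cos (θ / 2) ^ 2 + (64 * b ^ 2 - 16) * sin (θ / 2) ^ 2) *
    sin_sq_add_cos_sq (θ / 2)

lemma hasDerivAt_jacobiNormalFormDeriv (ha : -1 < a) (hb : -1 < b) (m : ℕ)
    (hθ : θ ∈ Set.Ioo 0 π) :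
    HasDerivAt (jacobiNormalFormDeriv a b m)
      (-(jacobiFrequency a b (m + 1) ^ 2 + liouvillePotential a b θ) *
        jacobiNormalForm a b (m + 1) θ) θ := by
  refine (((hasDerivAt_liouvilleLogDeriv a b hθ).mul
    (hasDerivAt_jacobiNormalForm_succ ha hb m hθ)).sub
    ((hasDerivAt_jacobiNormalForm_add_one ha hb m hθ).const_mul _)).congr_deriv ?_
  rw [jacobiNormalFormDeriv, jacobiFrequency]
  push_cast
  ring

lemma abs_liouvillePotential_le (a b : ℝ) (hθ : θ ∈ Set.Ioc 0 (π / 2)) :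
    |liouvillePotential a b θ| ≤ (|1 / 4 - a ^ 2| + |1 / 4 - b ^ 2|) * π ^ 2 / 4 / θ ^ 2 := by
  have hsin : θ / π ≤ sin (θ / 2) := by
    refine (mul_le_sin (x := θ / 2) (by linarith [hθ.1])
      (by linarith [pi_pos, hθ.2])).trans_eq' ?_
    ring
  have hcos : sin (θ / 2) ≤ cos (θ / 2) := by
    rw [← sin_pi_div_two_sub]
    exact sin_le_sin_of_le_of_le_pi_div_two (by linarith [pi_pos, hθ.1]) (by linarith [hθ.1])
      (by linarith [hθ.2])
  have hpos : 0 < θ / π := div_pos hθ.1 pi_pos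
  calc |liouvillePotential a b θ|
      ≤ |1 / 4 - a ^ 2| / (4 * sin (θ / 2) ^ 2) + |1 / 4 - b ^ 2| / (4 * cos (θ / 2) ^ 2) := by
        refine (abs_add_le _ _).trans_eq ?_
        rw [abs_div, abs_div, abs_of_nonneg (by positivity : 0 ≤ 4 * sin (θ / 2) ^ 2),
          abs_of_nonneg (by positivity : 0 ≤ 4 * cos (θ / 2) ^ 2)]
    _ ≤ |1 / 4 - a ^ 2| / (4 * (θ / π) ^ 2) + |1 / 4 - b ^ 2| / (4 * (θ / π) ^ 2) := by
        gcongr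
        exact hsin.trans hcos
    _ = _ := by
        field_simp

end DifferentialEquation

section LiouvilleGreen

/-- The functions `u` and `v = u'` solve the perturbed oscillator equation `u'' + (N² + g) u = 0`
on `[x, b]`, with a perturbation `|g| ≤ K / y²`. -/
structure IsPerturbedOscillator (N K : ℝ) (g u v : ℝ → ℝ) (x b : ℝ) : Prop where
  hasDerivAt_fst : ∀ y ∈ Set.Icc x b, HasDerivAt u (v y) y
  hasDerivAt_snd : ∀ y ∈ Set.Icc x b, HasDerivAt v (-(N ^ 2 + g y) * u y) y
  abs_perturbation_le : ∀ y ∈ Set.Icc x b, |g y| ≤ K / y ^ 2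

/-- The energy `u² + (v / N)²`, conserved by the unperturbed oscillator `u' = v`, `v' = -N² u`. -/
noncomputable def oscillatorEnergy (N : ℝ) (u v : ℝ → ℝ) (y : ℝ) : ℝ := u y ^ 2 + (v y / N) ^ 2

variable {u v g : ℝ → ℝ} {N K x b : ℝ}

lemma abs_le_sqrt_oscillatorEnergy (N : ℝ) (u v : ℝ → ℝ) (y : ℝ) :
    |u y| ≤ √(oscillatorEnergy N u v y) :=
  abs_le_sqrt (le_add_of_nonneg_right (sq_nonneg _))

lemma sqrt_oscillatorEnergy_le (N : ℝ) (u v : ℝ → ℝ) (y : ℝ) :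
    √(oscillatorEnergy N u v y) ≤ |u y| + |v y / N| := by
  refine sqrt_le_iff.mpr ⟨by positivity, ?_⟩
  rw [oscillatorEnergy, ← sq_abs (u y), ← sq_abs (v y / N)]
  exact pow_add_pow_le (abs_nonneg _) (abs_nonneg _) two_ne_zero

lemma hasDerivAt_oscillatorEnergy {y : ℝ} (hN : N ≠ 0) (hu : HasDerivAt u (v y) y)
    (hv : HasDerivAt v (-(N ^ 2 + g y) * u y) y) :
    HasDerivAt (oscillatorEnergy N u v) (-(g y / N) * (2 * u y * (v y / N))) y := by
  refine ((hu.pow 2).add ((hv.div_const N).pow 2)).congr_deriv ?_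
  simp only [Nat.cast_ofNat, Nat.add_one_sub_one, pow_one]
  field_simp
  ring

lemma hasDerivAt_mul_cos_sub_mul_sin (hN : N ≠ 0) (x : ℝ) {y : ℝ} (hu : HasDerivAt u (v y) y)
    (hv : HasDerivAt v (-(N ^ 2 + g y) * u y) y) :
    HasDerivAt (fun y => u y * cos (N * (y - x)) - v y / N * sin (N * (y - x)))
      (g y / N * u y * sin (N * (y - x))) y := by
  have hphase : HasDerivAt (fun y => N * (y - x)) N y := by
    simpa using ((hasDerivAt_id' y).sub_const x).const_mul N
  refine ((hu.mul hphase.cos).sub ((hv.div_const N).mul hphase.sin)).congr_deriv ?_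
  field_simp
  ring

lemma neg_le_deriv_oscillatorEnergy (hN : 0 < N) {y : ℝ} (hg : |g y| ≤ K / y ^ 2) :
    -(K / N / y ^ 2 * oscillatorEnergy N u v y) ≤ -(g y / N) * (2 * u y * (v y / N)) := by
  have hamgm : |2 * u y * (v y / N)| ≤ oscillatorEnergy N u v y := by
    rw [oscillatorEnergy, ← sq_abs (u y), ← sq_abs (v y / N), abs_mul, abs_mul, abs_two]
    exact two_mul_le_add_sq _ _
  rw [neg_mul, neg_le_neg_iff]
  calc g y / N * (2 * u y * (v y / N)) ≤ |g y / N * (2 * u y * (v y / N))| := le_abs_self _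
    _ = |g y| / N * |2 * u y * (v y / N)| := by rw [abs_mul, abs_div, abs_of_pos hN]
    _ ≤ K / y ^ 2 / N * oscillatorEnergy N u v y := by
      have hKy := (abs_nonneg _).trans hg
      gcongr
    _ = _ := by ring

namespace IsPerturbedOscillator

lemma mono_left (h : IsPerturbedOscillator N K g u v x b) {y : ℝ} (hxy : x ≤ y) :
    IsPerturbedOscillator N K g u v y b where
  hasDerivAt_fst z hz := h.hasDerivAt_fst z ⟨hxy.trans hz.1, hz.2⟩
  hasDerivAt_snd z hz := h.hasDerivAt_snd z ⟨hxy.trans hz.1, hz.2⟩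
  abs_perturbation_le z hz := h.abs_perturbation_le z ⟨hxy.trans hz.1, hz.2⟩

lemma nonneg (h : IsPerturbedOscillator N K g u v x b) (hx : 0 < x) (hxb : x ≤ b) : 0 ≤ K := by
  have hKx := (abs_nonneg _).trans (h.abs_perturbation_le x ⟨le_rfl, hxb⟩)
  rwa [le_div_iff₀ (by positivity), zero_mul] at hKx

lemma energy_le_mul_exp (h : IsPerturbedOscillator N K g u v x b) (hN : 0 < N) (hx : 0 < x)
    (hxb : x ≤ b) :
    oscillatorEnergy N u v x ≤ oscillatorEnergy N u v b * exp (K / N / x) := by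
  have hderiv : ∀ y ∈ Set.Icc x b,
      HasDerivAt (fun y => oscillatorEnergy N u v y * exp (-(K / N) / y))
        ((-(g y / N) * (2 * u y * (v y / N)) + K / N / y ^ 2 * oscillatorEnergy N u v y) *
          exp (-(K / N) / y)) y := by
    intro y hy
    have hexp := ((hasDerivAt_const y (-(K / N))).fun_div (hasDerivAt_id' y)
      (hx.trans_le hy.1).ne').exp
    refine ((hasDerivAt_oscillatorEnergy hN.ne' (h.hasDerivAt_fst y hy)
      (h.hasDerivAt_snd y hy)).mul hexp).congr_deriv ?_
    ring
  have hmono : MonotoneOn (fun y => oscillatorEnergy N u v y * exp (-(K / N) / y))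
      (Set.Icc x b) :=
    monotoneOn_of_hasDerivWithinAt_nonneg (convex_Icc x b)
      (fun y hy => (hderiv y hy).continuousAt.continuousWithinAt)
      (fun y hy => (hderiv y (interior_subset hy)).hasDerivWithinAt)
      (fun y hy => mul_nonneg (neg_le_iff_add_nonneg.mp (neg_le_deriv_oscillatorEnergy hN
        (h.abs_perturbation_le y (interior_subset hy)))) (exp_pos _).le)
  have hKN : 0 ≤ K / N := div_nonneg (h.nonneg hx hxb) hN.le
  have hle := hmono ⟨le_rfl, hxb⟩ ⟨hxb, le_rfl⟩ hxb
  have hexp_le : exp (-(K / N) / b) ≤ 1 :=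
    exp_le_one_iff.mpr (div_nonpos_of_nonpos_of_nonneg (neg_nonpos.mpr hKN) (hx.le.trans hxb))
  have henergy : 0 ≤ oscillatorEnergy N u v b := add_nonneg (sq_nonneg _) (sq_nonneg _)
  simpa only [neg_div, exp_neg, ← div_eq_mul_inv, div_le_iff₀ (exp_pos _)] using
    hle.trans (mul_le_of_le_one_right henergy hexp_le)

lemma abs_le_mul_exp (h : IsPerturbedOscillator N K g u v x b) (hN : 0 < N) (hx : 0 < x)
    {y : ℝ} (hy : y ∈ Set.Icc x b) :
    |u y| ≤ √(oscillatorEnergy N u v b) * exp (K / N / x) := by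
  have hKN : 0 ≤ K / N := div_nonneg (h.nonneg hx (hy.1.trans hy.2)) hN.le
  have hyx : K / N / y ≤ K / N / x := div_le_div_of_nonneg_left hKN hx hy.1
  calc |u y| ≤ √(oscillatorEnergy N u v y) := abs_le_sqrt_oscillatorEnergy N u v y
    _ ≤ √(oscillatorEnergy N u v b * exp (K / N / y)) :=
      sqrt_le_sqrt ((h.mono_left hy.1).energy_le_mul_exp hN (hx.trans_le hy.1) hy.2)
    _ = √(oscillatorEnergy N u v b) * exp (K / N / y / 2) := by
      rw [sqrt_mul' _ (exp_pos _).le, ← exp_half]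
    _ ≤ _ := mul_le_mul_of_nonneg_left (exp_le_exp.mpr
      ((half_le_self (div_nonneg hKN (hx.le.trans hy.1))).trans hyx)) (sqrt_nonneg _)

theorem abs_sub_cos_sub_sin_le (h : IsPerturbedOscillator N K g u v x b) (hN : 0 < N)
    (hx : 0 < x) (hxb : x ≤ b) :
    |u x - (u b * cos (N * (b - x)) - v b / N * sin (N * (b - x)))| ≤
      √(oscillatorEnergy N u v b) * exp (K / N / x) * (K / N / x) := by
  set S := √(oscillatorEnergy N u v b) * exp (K / N / x)
  have hKN : 0 ≤ K / N := div_nonneg (h.nonneg hx hxb) hN.le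
  have hderiv : ∀ y ∈ Set.Icc x b, HasDerivAt
      (fun y => u y * cos (N * (y - x)) - v y / N * sin (N * (y - x)) - u x)
      (g y / N * u y * sin (N * (y - x))) y := fun y hy =>
    (hasDerivAt_mul_cos_sub_mul_sin hN.ne' x (h.hasDerivAt_fst y hy)
      (h.hasDerivAt_snd y hy)).sub_const (u x)
  have hderiv_le : ∀ y ∈ Set.Icc x b,
      ‖g y / N * u y * sin (N * (y - x))‖ ≤ S * (K / N) / y ^ 2 := by
    intro y hy
    have hKy := (abs_nonneg _).trans (h.abs_perturbation_le y hy)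
    rw [norm_eq_abs, abs_mul, abs_mul, abs_div, abs_of_pos hN]
    calc |g y| / N * |u y| * |sin (N * (y - x))| ≤ K / y ^ 2 / N * S * 1 := by
          gcongr
          · exact h.abs_perturbation_le y hy
          · exact h.abs_le_mul_exp hN hx hy
          · exact abs_sin_le_one _
      _ = S * (K / N) / y ^ 2 := by ring
  have hprimitive : ∀ y ∈ Set.Icc x b,
      HasDerivAt (fun y => S * (K / N) * (x⁻¹ - y⁻¹)) (S * (K / N) / y ^ 2) y := by
    intro y hy
    refine (((hasDerivAt_inv (hx.trans_le hy.1).ne').const_sub x⁻¹).const_mul _).congr_deriv ?_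
    ring
  have hbound := image_norm_le_of_norm_deriv_right_le_deriv_boundary'
    (fun y hy => (hderiv y hy).continuousAt.continuousWithinAt)
    (fun y hy => (hderiv y (Set.Ico_subset_Icc_self hy)).hasDerivWithinAt)
    (by simp)
    (fun y hy => (hprimitive y hy).continuousAt.continuousWithinAt)
    (fun y hy => (hprimitive y (Set.Ico_subset_Icc_self hy)).hasDerivWithinAt)
    (fun y hy => hderiv_le y (Set.Ico_subset_Icc_self hy)) ⟨hxb, le_rfl⟩
  rw [abs_sub_comm, div_eq_mul_inv _ x, ← mul_assoc]
  refine hbound.trans (mul_le_mul_of_nonneg_left ?_ (by positivity))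
  exact sub_le_self _ (inv_nonneg.mpr (hx.le.trans hxb))

end IsPerturbedOscillator

end LiouvilleGreen

section InteriorAsymptotics

variable {a b : ℝ}

lemma half_le_jacobiFrequency_succ (ha : -1 < a) (hb : -1 < b) (m : ℕ) :
    ((m : ℝ) + 1) / 2 ≤ jacobiFrequency a b (m + 1) := by
  have : (0 : ℝ) ≤ m := m.cast_nonneg
  rw [jacobiFrequency]
  push_cast
  linarith

lemma isPerturbedOscillator_jacobiNormalForm (ha : -1 < a) (hb : -1 < b) (m : ℕ) {θ : ℝ}
    (hθ : 0 < θ) :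
    IsPerturbedOscillator (jacobiFrequency a b (m + 1))
      ((|1 / 4 - a ^ 2| + |1 / 4 - b ^ 2|) * π ^ 2 / 4) (liouvillePotential a b)
      (jacobiNormalForm a b (m + 1)) (jacobiNormalFormDeriv a b m) θ (π / 2) where
  hasDerivAt_fst y hy := hasDerivAt_jacobiNormalForm_succ ha hb m
    ⟨hθ.trans_le hy.1, by linarith [hy.2, pi_pos]⟩
  hasDerivAt_snd y hy := hasDerivAt_jacobiNormalFormDeriv ha hb m
    ⟨hθ.trans_le hy.1, by linarith [hy.2, pi_pos]⟩
  abs_perturbation_le y hy := abs_liouvillePotential_le a b ⟨hθ.trans_le hy.1, hy.2⟩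

lemma liouvilleLogDeriv_half_pi (a b : ℝ) : liouvilleLogDeriv a b (π / 2) = (a - b) / 2 := by
  have hquarter : π / 2 / 2 = π / 4 := by ring
  rw [liouvilleLogDeriv, hquarter, sin_pi_div_four, cos_pi_div_four, div_self (by positivity)]
  ring

lemma abs_le_mul_of_abs_sub_mul_le {R x y C n : ℝ} (hR : 0 ≤ R) (hn : 1 ≤ n) (hy : |y| ≤ 1)
    (h : |x - R * y| ≤ C * (R / n)) : |x| ≤ (1 + |C|) * R := by
  have hRn : R / n ≤ R := div_le_self hR hn
  calc |x| = |x - R * y + R * y| := by rw [sub_add_cancel]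
    _ ≤ C * (R / n) + R * |y| := by
      refine (abs_add_le _ _).trans ?_
      rw [abs_mul R, abs_of_nonneg hR]
      gcongr
    _ ≤ |C| * R + R * 1 := by
      gcongr
      exact le_abs_self C
    _ = (1 + |C|) * R := by ring

lemma jacobiNormalFormDeriv_half_pi_div_jacobiFrequency (ha : -1 < a) (hb : -1 < b) (m : ℕ) :
    jacobiNormalFormDeriv a b m (π / 2) / jacobiFrequency a b (m + 1) =
      ((a - b) / 2 * jacobiNormalForm a b (m + 1) (π / 2) -
        (a + b + 1) / 2 * jacobiNormalForm (a + 1) (b + 1) m (π / 2)) /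
          jacobiFrequency a b (m + 1) - jacobiNormalForm (a + 1) (b + 1) m (π / 2) := by
  have hN := half_le_jacobiFrequency_succ ha hb m
  have hN_ne : jacobiFrequency a b (m + 1) ≠ 0 := by
    have : (0 : ℝ) ≤ m := m.cast_nonneg
    linarith
  have hfreq : (m : ℝ) + a + b + 2 = jacobiFrequency a b (m + 1) + (a + b + 1) / 2 := by
    rw [jacobiFrequency]
    push_cast
    ring
  rw [jacobiNormalFormDeriv, liouvilleLogDeriv_half_pi, hfreq]
  field_simp
  ring

lemma exists_abs_jacobiNormalFormDeriv_half_pi_sub_le (ha : -1 < a) (hb : -1 < b) :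
    ∃ C, ∀ m : ℕ, |jacobiNormalFormDeriv a b m (π / 2) / jacobiFrequency a b (m + 1) -
      (√(π * (m + 1)))⁻¹ * sin (midpointPhase a b (m + 1))| ≤
        C * ((√(π * (m + 1)))⁻¹ / (m + 1)) := by
  obtain ⟨C₁, hC₁⟩ := exists_abs_jacobiNormalForm_half_pi_sub_le ha hb
  obtain ⟨C₂, hC₂⟩ := exists_abs_jacobiNormalForm_add_one_half_pi_add_le ha hb
  refine ⟨|a - b| * (1 + |C₁|) + |a + b + 1| * (1 + |C₂|) + C₂, fun m => ?_⟩
  have hN := half_le_jacobiFrequency_succ ha hb m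
  have hm : (0 : ℝ) ≤ m := m.cast_nonneg
  have hU := abs_le_mul_of_abs_sub_mul_le (by positivity) (by linarith) (abs_cos_le_one _) (hC₁ m)
  rw [jacobiNormalFormDeriv_half_pi_div_jacobiFrequency ha hb]
  specialize hC₂ m
  set N := jacobiFrequency a b (m + 1)
  set R := (√(π * (m + 1)))⁻¹
  set ψ := midpointPhase a b (m + 1)
  set U := jacobiNormalForm a b (m + 1) (π / 2)
  set W := jacobiNormalForm (a + 1) (b + 1) m (π / 2)
  have hN_pos : 0 < N := by linarith
  have hW : |W| ≤ (1 + |C₂|) * R :=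
    abs_le_mul_of_abs_sub_mul_le (n := m + 1) (by positivity) (by linarith)
      ((abs_neg _).trans_le (abs_sin_le_one ψ)) (by rwa [mul_neg, sub_neg_eq_add])
  calc |((a - b) / 2 * U - (a + b + 1) / 2 * W) / N - W - R * sin ψ|
      = |((a - b) / 2 * U - (a + b + 1) / 2 * W) / N - (W + R * sin ψ)| := by rw [sub_sub]
    _ ≤ (|a - b| / 2 * |U| + |a + b + 1| / 2 * |W|) / N + |W + R * sin ψ| := by
        refine (abs_sub _ _).trans (add_le_add_left ?_ _)
        rw [abs_div, abs_of_pos hN_pos]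
        gcongr
        refine (abs_sub _ _).trans_eq ?_
        rw [abs_mul, abs_mul, abs_div, abs_div, abs_two]
    _ ≤ (|a - b| / 2 * ((1 + |C₁|) * R) + |a + b + 1| / 2 * ((1 + |C₂|) * R)) / ((m + 1) / 2) +
          C₂ * (R / (m + 1)) := by
        gcongr
    _ = _ := by
        rw [div_div_eq_mul_div]
        ring

lemma midpointPhase_add_eq_neg_omegaA (a b : ℝ) (n : ℕ) (θ : ℝ) :
    midpointPhase a b n + jacobiFrequency a b n * (π / 2 - θ) =
      -omegaA a (jacobiFrequency a b n * θ) := by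
  rw [midpointPhase, omegaA, jacobiFrequency]
  ring

lemma exists_sqrt_oscillatorEnergy_half_pi_le (ha : -1 < a) (hb : -1 < b) :
    ∃ C, ∀ m : ℕ, √(oscillatorEnergy (jacobiFrequency a b (m + 1)) (jacobiNormalForm a b (m + 1))
      (jacobiNormalFormDeriv a b m) (π / 2)) ≤ C * (√(π * (m + 1)))⁻¹ := by
  obtain ⟨C₁, hC₁⟩ := exists_abs_jacobiNormalForm_half_pi_sub_le ha hb
  obtain ⟨C₂, hC₂⟩ := exists_abs_jacobiNormalFormDeriv_half_pi_sub_le ha hb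
  refine ⟨1 + |C₁| + (1 + |C₂|), fun m => (sqrt_oscillatorEnergy_le _ _ _ _).trans ?_⟩
  have hm : (1 : ℝ) ≤ m + 1 := le_add_of_nonneg_left m.cast_nonneg
  rw [add_mul]
  exact add_le_add
    (abs_le_mul_of_abs_sub_mul_le (by positivity) hm (abs_cos_le_one _) (hC₁ m))
    (abs_le_mul_of_abs_sub_mul_le (by positivity) hm (abs_sin_le_one _) (hC₂ m))

lemma exists_abs_sub_cos_sub_sin_jacobiNormalForm_le (ha : -1 < a) (hb : -1 < b) {c : ℝ}
    (hc : 0 < c) :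
    ∃ C, ∀ (m : ℕ) (θ : ℝ), c / (m + 1) ≤ θ → θ ≤ π / 2 →
      |jacobiNormalForm a b (m + 1) θ -
        (jacobiNormalForm a b (m + 1) (π / 2) * cos (jacobiFrequency a b (m + 1) * (π / 2 - θ)) -
          jacobiNormalFormDeriv a b m (π / 2) / jacobiFrequency a b (m + 1) *
            sin (jacobiFrequency a b (m + 1) * (π / 2 - θ)))| ≤
      C * ((√(π * (m + 1)))⁻¹ / ((m + 1) * θ)) := by
  obtain ⟨B, hB⟩ := exists_sqrt_oscillatorEnergy_half_pi_le ha hb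
  set K := (|1 / 4 - a ^ 2| + |1 / 4 - b ^ 2|) * π ^ 2 / 4
  have : 0 ≤ K := by positivity
  refine ⟨B * exp (2 * K / c) * (2 * K), fun m θ hcθ hθ => ?_⟩
  have hm : (0 : ℝ) ≤ m := m.cast_nonneg
  have hθ_pos : 0 < θ := (by positivity : 0 < c / ((m : ℝ) + 1)).trans_le hcθ
  have hcθ' : c ≤ (m + 1) * θ := by rwa [div_le_iff₀' (by positivity)] at hcθ
  have hN := half_le_jacobiFrequency_succ ha hb m
  have hN_pos : 0 < jacobiFrequency a b (m + 1) := by linarith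
  have hrate : K / jacobiFrequency a b (m + 1) / θ ≤ 2 * K / ((m + 1) * θ) := by
    calc K / jacobiFrequency a b (m + 1) / θ ≤ K / ((m + 1) / 2) / θ := by gcongr
      _ = _ := by field_simp
  have hrate_le : K / jacobiFrequency a b (m + 1) / θ ≤ 2 * K / c := hrate.trans (by gcongr)
  have henergy_nonneg := (sqrt_nonneg _).trans (hB m)
  calc _ ≤ _ := (isPerturbedOscillator_jacobiNormalForm ha hb m hθ_pos).abs_sub_cos_sub_sin_le
        hN_pos hθ_pos hθ
    _ ≤ B * (√(π * (m + 1)))⁻¹ * exp (2 * K / c) * (2 * K / ((m + 1) * θ)) := by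
        gcongr
        exact hB m
    _ = _ := by ring

lemma abs_sub_mul_cos_add_le (u p q R ψ t : ℝ) :
    |u - R * cos (ψ + t)| ≤
      |u - (p * cos t - q * sin t)| + |p - R * cos ψ| + |q - R * sin ψ| := by
  have hcos : |(p - R * cos ψ) * cos t| ≤ |p - R * cos ψ| := by
    rw [abs_mul]
    exact mul_le_of_le_one_right (abs_nonneg _) (abs_cos_le_one t)
  have hsin : |(q - R * sin ψ) * sin t| ≤ |q - R * sin ψ| := by
    rw [abs_mul]
    exact mul_le_of_le_one_right (abs_nonneg _) (abs_sin_le_one t)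
  calc |u - R * cos (ψ + t)|
      = |u - (p * cos t - q * sin t) + (p - R * cos ψ) * cos t - (q - R * sin ψ) * sin t| := by
        rw [cos_add]
        ring_nf
    _ ≤ |u - (p * cos t - q * sin t)| + |(p - R * cos ψ) * cos t| + |(q - R * sin ψ) * sin t| :=
        (abs_sub _ _).trans (add_le_add_left (abs_add_le _ _) _)
    _ ≤ _ := by gcongr

theorem exists_abs_jacobiNormalForm_sub_le (ha : -1 < a) (hb : -1 < b) {c : ℝ} (hc : 0 < c) :
    ∃ C, ∀ (m : ℕ) (θ : ℝ), c / (m + 1) ≤ θ → θ ≤ π / 2 →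
      |jacobiNormalForm a b (m + 1) θ -
        (√(π * (m + 1)))⁻¹ * cos (omegaA a (jacobiFrequency a b (m + 1) * θ))| ≤
      C * ((√(π * (m + 1)))⁻¹ / ((m + 1) * θ)) := by
  obtain ⟨C₀, hC₀⟩ := exists_abs_sub_cos_sub_sin_jacobiNormalForm_le ha hb hc
  obtain ⟨C₁, hC₁⟩ := exists_abs_jacobiNormalForm_half_pi_sub_le ha hb
  obtain ⟨C₂, hC₂⟩ := exists_abs_jacobiNormalFormDeriv_half_pi_sub_le ha hb
  refine ⟨C₀ + (|C₁| + |C₂|) * (π / 2), fun m θ hcθ hθ => ?_⟩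
  have hθ_pos : 0 < θ := (by positivity : 0 < c / ((m : ℝ) + 1)).trans_le hcθ
  specialize hC₀ m θ hcθ hθ
  specialize hC₁ m
  specialize hC₂ m
  rw [← cos_neg (omegaA a _), ← midpointPhase_add_eq_neg_omegaA a b (m + 1) θ]
  set U := jacobiNormalForm a b (m + 1)
  set V := jacobiNormalFormDeriv a b m (π / 2) / jacobiFrequency a b (m + 1)
  set R := (√(π * (m + 1)))⁻¹
  set ψ := midpointPhase a b (m + 1)
  have hRθ : R / (m + 1) ≤ π / 2 * (R / ((m + 1) * θ)) := by
    calc R / (m + 1) = θ * (R / ((m + 1) * θ)) := by field_simp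
      _ ≤ _ := by gcongr
  have hC₁' := hC₁.trans (mul_le_mul (le_abs_self _) hRθ (by positivity) (abs_nonneg _))
  have hC₂' := hC₂.trans (mul_le_mul (le_abs_self _) hRθ (by positivity) (abs_nonneg _))
  refine (abs_sub_mul_cos_add_le _ (U (π / 2)) V R ψ _).trans
    ((add_le_add (add_le_add hC₀ hC₁') hC₂').trans_eq ?_)
  ring

lemma liouvilleWeight_pos (a b : ℝ) {θ : ℝ} (hθ : θ ∈ Set.Ioo 0 π) :
    0 < liouvilleWeight a b θ :=
  mul_pos (rpow_pos_of_pos (sin_half_pos hθ) _) (rpow_pos_of_pos (cos_half_pos hθ) _)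

lemma mAB_eq_inv_liouvilleWeight (a b : ℝ) {θ : ℝ} (hθ : θ ∈ Set.Ioo 0 π) :
    mAB a b θ = (√π)⁻¹ * (liouvilleWeight a b θ)⁻¹ := by
  rw [mAB, liouvilleWeight, mul_inv, ← rpow_neg (sin_half_pos hθ).le,
    ← rpow_neg (cos_half_pos hθ).le, sqrt_eq_rpow, ← rpow_neg pi_pos.le]
  ring_nf

lemma mAB_pos (a b : ℝ) {θ : ℝ} (hθ : θ ∈ Set.Ioo 0 π) : 0 < mAB a b θ := by
  have hw := liouvilleWeight_pos a b hθ
  rw [mAB_eq_inv_liouvilleWeight a b hθ]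
  positivity

theorem exists_abs_jacobiP_cos_sub_le (ha : -1 < a) (hb : -1 < b) {c : ℝ} (hc : 0 < c) :
    ∃ C, ∀ n : ℕ, n ≠ 0 → ∀ θ : ℝ, c / n ≤ θ → θ ≤ π / 2 →
      |jacobiP a b n (cos θ) - (√n)⁻¹ * mAB a b θ * cos (omegaA a (jacobiFrequency a b n * θ))| ≤
        C * ((√n)⁻¹ * mAB a b θ / (n * θ)) := by
  obtain ⟨C, hC⟩ := exists_abs_jacobiNormalForm_sub_le ha hb hc
  refine ⟨C, fun n hn θ hcθ hθ => ?_⟩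
  obtain ⟨m, rfl⟩ := Nat.exists_eq_succ_of_ne_zero hn
  push_cast at hcθ ⊢
  have hθ_mem : θ ∈ Set.Ioo 0 π :=
    ⟨(by positivity : 0 < c / ((m : ℝ) + 1)).trans_le hcθ, by linarith [pi_pos]⟩
  have hw := liouvilleWeight_pos a b hθ_mem
  have hsqrt : √(π * (m + 1)) = √π * √(m + 1) := sqrt_mul pi_pos.le _
  rw [mAB_eq_inv_liouvilleWeight a b hθ_mem]
  have hscaled := abs_mul_sub_le_mul (inv_pos.mpr hw).le (hC m θ hcθ hθ) rfl
  rw [jacobiNormalForm, inv_mul_cancel_left₀ hw.ne', hsqrt] at hscaled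
  convert hscaled using 1
  · congr 2
    ring
  · ring

end InteriorAsymptotics

section GammaRatio

/-- `f x = 1 + O(1 / x)` as `x → ∞`. -/
def IsOneAddBigOInv (f : ℝ → ℝ) : Prop := (fun x => f x - 1) =O[atTop] fun x => x⁻¹

namespace IsOneAddBigOInv

variable {f g : ℝ → ℝ}

lemma tendsto (hf : IsOneAddBigOInv f) : Tendsto f atTop (𝓝 1) := by
  simpa using (hf.trans_tendsto tendsto_inv_atTop_zero).add_const 1

lemma congr' (hf : IsOneAddBigOInv f) (hfg : f =ᶠ[atTop] g) : IsOneAddBigOInv g :=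
  Asymptotics.IsBigO.congr' hf (hfg.sub .rfl) .rfl

lemma mul (hf : IsOneAddBigOInv f) (hg : IsOneAddBigOInv g) :
    IsOneAddBigOInv fun x => f x * g x := by
  have hfg : (fun x => (f x - 1) * g x) =O[atTop] fun x : ℝ => x⁻¹ := by
    simpa only [mul_one] using Asymptotics.IsBigO.mul hf (hg.tendsto.isBigO_one ℝ)
  exact (hfg.add hg).congr_left fun x => by ring

lemma rpow_const (hf : IsOneAddBigOInv f) (p : ℝ) : IsOneAddBigOInv fun x => f x ^ p := by
  have hdiff : DifferentiableAt ℝ (fun y : ℝ => y ^ p) 1 :=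
    (hasDerivAt_rpow_const (.inl one_ne_zero)).differentiableAt
  exact ((hdiff.isBigO_sub.comp_tendsto hf.tendsto).trans hf).congr_left fun x => by
    simp only [Function.comp_apply, one_rpow]

lemma of_le_one (hf : IsOneAddBigOInv f) (hfg : f ≤ᶠ[atTop] g) (hg : ∀ᶠ x in atTop, g x ≤ 1) :
    IsOneAddBigOInv g := by
  refine Asymptotics.IsBigO.trans (.of_norm_eventuallyLE ?_) hf.norm_left
  filter_upwards [hfg, hg] with x hfx hgx
  rw [norm_eq_abs, norm_eq_abs, abs_sub_comm, abs_of_nonneg (sub_nonneg.mpr hgx), abs_sub_comm,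
    abs_of_nonneg (sub_nonneg.mpr (hfx.trans hgx))]
  exact sub_le_sub_left hfx 1

lemma comp_add_const (hf : IsOneAddBigOInv f) (c : ℝ) : IsOneAddBigOInv fun x => f (x + c) := by
  refine (hf.comp_tendsto (Filter.tendsto_atTop_add_const_right _ c Filter.tendsto_id)).trans
    (.of_bound 2 ?_)
  filter_upwards [Filter.eventually_gt_atTop (2 * |c|)] with x hx
  have hx_pos : 0 < x := (by positivity : 0 ≤ 2 * |c|).trans_lt hx
  have hxc : x / 2 ≤ x + c := by linarith [neg_abs_le c]
  calc ‖(x + c)⁻¹‖ = (x + c)⁻¹ := norm_of_nonneg (inv_nonneg.mpr (by linarith))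
    _ ≤ (x / 2)⁻¹ := inv_anti₀ (by positivity) hxc
    _ = 2 * ‖x⁻¹‖ := by rw [inv_div, div_eq_mul_inv, norm_of_nonneg (inv_nonneg.mpr hx_pos.le)]

end IsOneAddBigOInv

lemma isOneAddBigOInv_add_const_div (c : ℝ) : IsOneAddBigOInv fun x => (x + c) / x := by
  refine (Asymptotics.isBigO_const_mul_self c (fun x : ℝ => x⁻¹) atTop).congr' ?_ .rfl
  filter_upwards [Filter.eventually_ne_atTop 0] with x hx
  rw [add_div, div_self hx, add_sub_cancel_left, div_eq_mul_inv]

lemma Gamma_add_le_mul_rpow {x s : ℝ} (hx : 0 < x) (hs₀ : 0 ≤ s) (hs₁ : s ≤ 1) :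
    Gamma (x + s) ≤ Gamma x * x ^ s := by
  have hΓ := Gamma_pos_of_pos hx
  rcases hs₀.eq_or_lt with rfl | hs₀
  · simp
  rcases hs₁.eq_or_lt with rfl | hs₁
  · rw [Gamma_add_one hx.ne', rpow_one, mul_comm]
  calc Gamma (x + s) = Gamma ((1 - s) * x + s * (x + 1)) := by ring_nf
    _ ≤ Gamma x ^ (1 - s) * Gamma (x + 1) ^ s :=
      Gamma_mul_add_mul_le_rpow_Gamma_mul_rpow_Gamma hx (by positivity) (sub_pos.mpr hs₁) hs₀
        (sub_add_cancel 1 s)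
    _ = Gamma x ^ (1 - s) * Gamma x ^ s * x ^ s := by
      rw [Gamma_add_one hx.ne', mul_rpow hx.le hΓ.le]
      ring
    _ = Gamma x * x ^ s := by rw [← rpow_add hΓ, sub_add_cancel, rpow_one]

lemma rpow_le_Gamma_add_div {x s : ℝ} (hx : 0 < x) (hs₀ : 0 ≤ s) (hs₁ : s ≤ 1) :
    ((x + s) / x) ^ (-(1 - s)) ≤ Gamma (x + s) / (Gamma x * x ^ s) := by
  have := Gamma_pos_of_pos hx
  have hxs : 0 < x + s := by positivity
  have hle := Gamma_add_le_mul_rpow hxs (sub_nonneg.mpr hs₁) (sub_le_self 1 hs₀)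
  rw [add_assoc, add_sub_cancel, Gamma_add_one hx.ne'] at hle
  have hpow : x ^ (1 - s) * x ^ s = x := by rw [← rpow_add hx, sub_add_cancel, rpow_one]
  rw [rpow_neg (by positivity), ← inv_rpow (by positivity), inv_div, div_rpow hx.le hxs.le,
    div_le_div_iff₀ (by positivity) (by positivity)]
  calc x ^ (1 - s) * (Gamma x * x ^ s) = x ^ (1 - s) * x ^ s * Gamma x := by ring
    _ ≤ _ := by rwa [hpow]

lemma isOneAddBigOInv_Gamma_add_div_of_le_one {s : ℝ} (hs₀ : 0 ≤ s) (hs₁ : s ≤ 1) :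
    IsOneAddBigOInv fun x => Gamma (x + s) / (Gamma x * x ^ s) := by
  refine ((isOneAddBigOInv_add_const_div s).rpow_const (-(1 - s))).of_le_one ?_ ?_
  all_goals filter_upwards [Filter.eventually_gt_atTop 0] with x hx
  · exact rpow_le_Gamma_add_div hx hs₀ hs₁
  · have := Gamma_pos_of_pos hx
    exact div_le_one_of_le₀ (Gamma_add_le_mul_rpow hx hs₀ hs₁) (by positivity)

theorem isOneAddBigOInv_Gamma_add_div {s : ℝ} (hs : 0 ≤ s) :
    IsOneAddBigOInv fun x => Gamma (x + s) / (Gamma x * x ^ s) := by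
  suffices h : ∀ (k : ℕ) {t : ℝ}, 0 ≤ t → t ≤ 1 →
      IsOneAddBigOInv fun x => Gamma (x + (t + k)) / (Gamma x * x ^ (t + k)) by
    have hfract := h ⌊s⌋₊ (Int.fract_nonneg s) (Int.fract_lt_one s).le
    rwa [natCast_floor_eq_intCast_floor hs, Int.fract_add_floor] at hfract
  intro k t ht₀ ht₁
  induction k with
  | zero => simpa using isOneAddBigOInv_Gamma_add_div_of_le_one ht₀ ht₁
  | succ k ih =>
    refine (ih.mul (isOneAddBigOInv_add_const_div (t + k))).congr' ?_
    filter_upwards [Filter.eventually_gt_atTop 0] with x hx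
    have hxt : x + (t + k) ≠ 0 := by positivity
    have hΓ := (Gamma_pos_of_pos hx).ne'
    rw [Nat.cast_succ, ← add_assoc t, ← add_assoc x (t + k), Gamma_add_one hxt,
      rpow_add_one hx.ne']
    field_simp

lemma isOneAddBigOInv_Gamma_div {α : ℝ} (hα : -1 < α) (β : ℝ) :
    IsOneAddBigOInv fun x => Gamma (x + α + β + 2) / Gamma (x + β + 1) * (√x)⁻¹ /
      (x + (α + β + 2) / 2) ^ (α + 1 / 2) := by
  refine ((((isOneAddBigOInv_Gamma_add_div (by linarith : 0 ≤ α + 1)).comp_add_const (β + 1)).mul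
    ((isOneAddBigOInv_add_const_div (β + 1)).rpow_const (α + 1))).mul
    ((isOneAddBigOInv_add_const_div ((α + β + 2) / 2)).rpow_const (-(α + 1 / 2)))).congr' ?_
  filter_upwards [Filter.eventually_gt_atTop 0, Filter.eventually_gt_atTop (-(β + 1)),
    Filter.eventually_gt_atTop (-((α + β + 2) / 2))] with x hx hxβ hxαβ
  rw [neg_lt_iff_pos_add] at hxβ hxαβ
  have hsqrt : x ^ (α + 1) = x ^ (α + 1 / 2) * √x := by
    rw [sqrt_eq_rpow, ← rpow_add hx]
    ring_nf
  have : 0 < (x + (β + 1)) ^ (α + 1) := rpow_pos_of_pos hxβ _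
  rw [rpow_neg (by positivity), div_rpow hxβ.le hx.le, div_rpow hxαβ.le hx.le, hsqrt,
    show x + (β + 1) + (α + 1) = x + α + β + 2 by ring, add_assoc x β 1]
  field_simp

lemma exists_abs_Gamma_div_sub_le {α β : ℝ} (hα : -1 < α) (hβ : -1 < β) :
    ∃ B, ∀ n : ℕ, n ≠ 0 →
      |Gamma (n + α + β + 2) / Gamma (n + β + 1) * (√n)⁻¹ -
        (n + (α + β + 2) / 2) ^ (α + 1 / 2)| ≤ B * ((n + (α + β + 2) / 2) ^ (α + 1 / 2) / n) := by
  obtain ⟨B, -, hB⟩ := Asymptotics.bound_of_isBigO_nat_atTop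
    ((isOneAddBigOInv_Gamma_div hα β).comp_tendsto tendsto_natCast_atTop_atTop)
  refine ⟨B, fun n hn => ?_⟩
  have hn_pos : (0 : ℝ) < n := by positivity
  have hpow : 0 < ((n : ℝ) + (α + β + 2) / 2) ^ (α + 1 / 2) := rpow_pos_of_pos (by linarith) _
  have hBn := hB (inv_ne_zero hn_pos.ne')
  simp only [Function.comp_apply, norm_eq_abs, abs_of_pos (inv_pos.mpr hn_pos)] at hBn
  refine (abs_mul_sub_le_mul hpow.le hBn (mul_one _)).trans_eq' ?_ |>.trans_eq ?_
  · rw [mul_div_cancel₀ _ hpow.ne']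
  · ring

end GammaRatio

section RightEndpoint

lemma abs_mul_sub_mul_le_mul_div {D R P J M x A B s n : ℝ} (hD : 0 ≤ D) (hP : 0 ≤ P) (hM : 0 ≤ M)
    (hx : |x| ≤ 1) (hs : 1 ≤ s) (hn : 1 ≤ n) (hA : 0 ≤ A) (hB : 0 ≤ B)
    (hJ : |J - R * M * x| ≤ A * (R * M * s / n)) (hDR : |D * R - P| ≤ B * (P / n)) :
    |D * J - P * (M * x)| ≤ ((1 + B) * A + B) * (P * M * s / n) := by
  have hDR_le : D * R ≤ (1 + B) * P := by
    calc D * R = D * R - P + P := (sub_add_cancel _ _).symm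
      _ ≤ B * P + P := by
        gcongr
        exact (le_abs_self _).trans (hDR.trans (by gcongr; exact div_le_self hP hn))
      _ = (1 + B) * P := by ring
  calc |D * J - P * (M * x)| = |D * (J - R * M * x) + (D * R - P) * (M * x)| := by ring_nf
    _ ≤ D * |J - R * M * x| + |D * R - P| * (M * |x|) := by
      refine (abs_add_le _ _).trans_eq ?_
      rw [abs_mul, abs_mul, abs_mul, abs_of_nonneg hD, abs_of_nonneg hM]
    _ ≤ D * (A * (R * M * s / n)) + B * (P / n) * (M * s) := by
      gcongr
      exact hx.trans hs
    _ = D * R * (A * (M * s / n)) + B * (P * M * s / n) := by ring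
    _ ≤ (1 + B) * P * (A * (M * s / n)) + B * (P * M * s / n) := by gcongr
    _ = ((1 + B) * A + B) * (P * M * s / n) := by ring

lemma exists_abs_Gamma_div_mul_jacobiP_sub_le {α β : ℝ} (hα : -1 < α) (hβ : -1 < β) {c : ℝ}
    (hc : 0 < c) :
    ∃ C, 0 < C ∧ ∀ n : ℕ, n ≠ 0 → ∀ t : ℝ, c / n ≤ t → t ≤ π / 2 →
      |Gamma (n + α + β + 2) / Gamma (n + β + 1) * jacobiP β (α + 1) n (cos t) -
        (n + (α + β + 2) / 2) ^ (α + 1 / 2) *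
          (mAB β (α + 1) t * cos (omegaA β ((n + (α + β + 2) / 2) * t)))| ≤
      C * ((n + (α + β + 2) / 2) ^ (α + 1 / 2) * mAB β (α + 1) t * (sin t)⁻¹ / n) := by
  obtain ⟨A, hA⟩ := exists_abs_jacobiP_cos_sub_le hβ (by linarith : -1 < α + 1) hc
  obtain ⟨B, hB⟩ := exists_abs_Gamma_div_sub_le hα hβ
  refine ⟨(1 + |B|) * (|A| + 1) + |B|, by positivity, fun n hn t hct ht => ?_⟩
  have hn_one : (1 : ℝ) ≤ n := mod_cast Nat.one_le_iff_ne_zero.mpr hn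
  have ht_pos : 0 < t := (by positivity : 0 < c / (n : ℝ)).trans_le hct
  have ht_mem : t ∈ Set.Ioo 0 π := ⟨ht_pos, by linarith [pi_pos]⟩
  have hsin := sin_pos_of_mem_Ioo ht_mem
  have hP : 0 < ((n : ℝ) + (α + β + 2) / 2) ^ (α + 1 / 2) := rpow_pos_of_pos (by linarith) _
  have hM := mAB_pos β (α + 1) ht_mem
  have hfreq : jacobiFrequency β (α + 1) n = n + (α + β + 2) / 2 := by
    rw [jacobiFrequency]
    ring
  specialize hA n hn t hct ht
  rw [hfreq] at hA
  refine abs_mul_sub_mul_le_mul_div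
    (div_pos (Gamma_pos_of_pos (by linarith)) (Gamma_pos_of_pos (by linarith))).le hP.le hM.le
    (abs_cos_le_one _) ((one_le_inv₀ hsin).mpr (sin_le_one t)) hn_one (by positivity)
    (abs_nonneg B) (hA.trans ?_) ((hB n hn).trans ?_)
  · calc A * ((√n)⁻¹ * mAB β (α + 1) t / (n * t))
        = A * ((√n)⁻¹ * mAB β (α + 1) t * t⁻¹ / n) := by ring
      _ ≤ (|A| + 1) * ((√n)⁻¹ * mAB β (α + 1) t * (sin t)⁻¹ / n) := by
        gcongr
        · exact (le_abs_self A).trans (le_add_of_nonneg_right zero_le_one)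
        · exact sin_le ht_pos.le
  · gcongr
    exact le_abs_self B

theorem dirichletJ_one_term_asymptotics_right_general {α β : ℝ} (hα : -1 < α) (hβ : -1 < β)
    (hαβ : α + β + 1 ≠ 0) {c : ℝ} (hc : 0 < c) :
    ∃ C : ℝ, 0 < C ∧ ∀ L : ℕ, 1 ≤ L → ∀ θ : ℝ, π / 2 ≤ θ → θ ≤ π - c / L →
      |dirichletJ α β L 1 (cos θ) -
          2 ^ (-(α + β + 1)) / Gamma (α + 1) * (L + (α + β + 2) / 2) ^ (α + 1 / 2) * (-1) ^ L *
            mAB β (α + 1) (π - θ) * cos (omegaA β ((L + (α + β + 2) / 2) * (π - θ)))| ≤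
        C * (2 ^ (-(α + β + 1)) / Gamma (α + 1)) * (L + (α + β + 2) / 2) ^ (α + 1 / 2) *
          mAB β (α + 1) (π - θ) * (sin (π - θ))⁻¹ * (L : ℝ)⁻¹ := by
  obtain ⟨C, hC, hbound⟩ := exists_abs_Gamma_div_mul_jacobiP_sub_le hα hβ hc
  refine ⟨C, hC, fun L hL θ hθ hθc => ?_⟩
  specialize hbound L (Nat.one_le_iff_ne_zero.mp hL) (π - θ) (by linarith) (by linarith)
  have hκ : 0 < (2 : ℝ) ^ (-(α + β + 1)) / Gamma (α + 1) :=
    div_pos (by positivity) (Gamma_pos_of_pos (by linarith))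
  rw [dirichletJ_one_eq_jacobiP hα hβ hαβ, ← neg_neg (cos θ), ← cos_pi_sub, jacobiP_neg]
  set κ := (2 : ℝ) ^ (-(α + β + 1)) / Gamma (α + 1)
  have hsign : |κ * (-1) ^ L| = κ := by
    rw [abs_mul, abs_neg_one_pow, mul_one, abs_of_pos hκ]
  calc _ = |κ * (-1) ^ L * (Gamma (L + α + β + 2) / Gamma (L + β + 1) *
          jacobiP β (α + 1) L (cos (π - θ)) - (L + (α + β + 2) / 2) ^ (α + 1 / 2) *
            (mAB β (α + 1) (π - θ) * cos (omegaA β ((L + (α + β + 2) / 2) * (π - θ)))))| := by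
        ring_nf
    _ ≤ κ * (C * ((L + (α + β + 2) / 2) ^ (α + 1 / 2) * mAB β (α + 1) (π - θ) *
          (sin (π - θ))⁻¹ / L)) := by
        rw [abs_mul, hsign]
        exact mul_le_mul_of_nonneg_left hbound hκ.le
    _ = _ := by ring

end RightEndpoint

/-- Lemma 2.4 ii): one-term asymptotics of the generalised Dirichlet kernel
`v_L^{(α,β)}(1,cos θ)` for `π/2 < θ ≤ π − c⁽¹⁾/L`, with `L̃ = L + (α+β+2)/2`
and `θ' = π − θ`. -/
theorem dirichletJ_one_term_asymptotics_right (α β : ℝ)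
    (hα : -(1 / 2 : ℝ) < α) (hβ : -(1 / 2 : ℝ) < β) :
    ∃ c : ℝ, 0 < c ∧ ∃ C : ℝ, 0 < C ∧
      ∀ L : ℕ, 1 ≤ L → ∀ θ : ℝ, Real.pi / 2 < θ → θ ≤ Real.pi - c / (L : ℝ) →
        |dirichletJ α β L 1 (Real.cos θ) -
            (2 : ℝ) ^ (-(α + β + 1)) / Real.Gamma (α + 1) *
              ((L : ℝ) + (α + β + 2) / 2) ^ (α + 1 / 2) * (-1 : ℝ) ^ L *
                mAB β (α + 1) (Real.pi - θ) *
                  Real.cos (omegaA β (((L : ℝ) + (α + β + 2) / 2) * (Real.pi - θ)))| ≤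
          C * ((2 : ℝ) ^ (-(α + β + 1)) / Real.Gamma (α + 1)) *
            ((L : ℝ) + (α + β + 2) / 2) ^ (α + 1 / 2) * mAB β (α + 1) (Real.pi - θ) *
              (Real.sin (Real.pi - θ))⁻¹ * (L : ℝ)⁻¹ := by
  obtain ⟨C, hC, hbound⟩ := dirichletJ_one_term_asymptotics_right_general
    (by linarith : -1 < α) (by linarith : -1 < β) (by linarith) one_pos
  exact ⟨1, one_pos, C, hC, fun L hL θ hθ => hbound L hL θ hθ.le⟩
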